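/- Let Ω ⊂ B_1 ⊂ ℝ^d be open, 0 ∈ ∂Ω, and φ : B_1 → ℝ continuous satisfying: φ > 0 on Ω, φ ≡ 0 on B_1 \ Ω, φ L-Lipschitz, φ ≥ κ dist(·, B_1 \ Ω) on B_{1/2}, and φ subharmonic in the sense of distributions. Then there exist constants δ_2 > 0, C > 0, and p > 0, depending only on d, L, κ, such that for every δ ∈ (0, δ_2] and every positive harmonic function w : Ω → ℝ with w ≤ 1 on B_1 ∩ {φ > δ}, one has w(x) ≤ C φ(x)^{-p} for all x ∈ B_{1/2} ∩ Ω. -/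

import Mathlib

open MeasureTheory Metric

open ContinuousLinearMap (lsmul)
open scoped Laplacian Pointwise Topology ContDiff ENNReal RealInnerProductSpace Convolution

/-!
Let `q` be the Green potential in `Ω` of the set `{φ > μ}`, on which `w ≤ 1`. Every ball on which
`w` is comparable to `w x` carries at most a multiple of `1 / w x` of the integral of `q`: exchange
the two points of the Green function by symmetry and use that `w` is superharmonic. Hence `q x` is
at most a multiple of `φ x ^ (-d) / w x`. On the other hand `q` is superharmonic in `Ω` and bounded
below on `{φ > μ}`, and this forces `φ ^ 2 ≤ C * q` in the half ball: `φ - √q`, corrected by a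
radial barrier, has no positive maximum. At such a point `x`, `φ x` would be small, so nearby there
would be zeros of `φ`, and `φ ≤ φ x / 4` on a fixed proportion of a ball around `x`; the mean value
inequalities for `φ` and `q` do not allow this. Together, `w ≤ C * φ ^ (-(d + 2))`.

No regularity of `Ω` is available to construct `q`, so `q` is a rescaled expected occupation time
of `{φ > μ}` by a random walk whose steps are uniform in small balls, killed when it comes near the
boundary of `Ω`; only its mean value inequalities at radii above a fixed scale are needed.
-/

section Laplacian

variable {E : Type*} [NormedAddCommGroup E] [InnerProductSpace ℝ E] [FiniteDimensional ℝ E]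

theorem laplacian_eq_sum_fderiv_fderiv {ι : Type*} [Fintype ι] (b : OrthonormalBasis ι ℝ E)
    {u : E → ℝ} (hu : ContDiff ℝ 2 u) (x : E) :
    Δ u x = ∑ i, fderiv ℝ (fun y ↦ fderiv ℝ u y (b i)) x (b i) := by
  have hdu : DifferentiableAt ℝ (fderiv ℝ u) x :=
    (hu.fderiv_right (m := 1) le_rfl).differentiable one_ne_zero x
  rw [InnerProductSpace.laplacian_eq_iteratedFDeriv_orthonormalBasis u b]
  refine Finset.sum_congr rfl fun i _ ↦ ?_
  rw [iteratedFDeriv_two_apply, fderiv_clm_apply hdu (differentiableAt_const _)]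
  simp

theorem continuous_laplacian {u : E → ℝ} (hu : ContDiff ℝ 2 u) : Continuous (Δ u) := by
  rw [InnerProductSpace.laplacian_eq_iteratedFDeriv_stdOrthonormalBasis]
  exact continuous_finsetSum _ fun i _ ↦
    (hu.continuous_iteratedFDeriv le_rfl).eval_const _

theorem laplacian_comp_norm_sq {g : ℝ → ℝ} (hg : ContDiff ℝ 2 g) (x : E) :
    Δ (fun y : E ↦ g (‖y‖ ^ 2)) x =
      4 * ‖x‖ ^ 2 * deriv (deriv g) (‖x‖ ^ 2) + 2 * Module.finrank ℝ E * deriv g (‖x‖ ^ 2) := by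
  have hg' : ContDiff ℝ 1 (deriv g) := hg.deriv' (n := 1)
  have hderiv (y v : E) :
      fderiv ℝ (fun y ↦ g (‖y‖ ^ 2)) y v = deriv g (‖y‖ ^ 2) * (2 * ⟪y, v⟫) := by
    have := (hg.differentiable two_ne_zero (‖y‖ ^ 2)).hasDerivAt.comp_hasFDerivAt y
      (hasStrictFDerivAt_norm_sq y).hasFDerivAt
    change fderiv ℝ (g ∘ fun y : E ↦ ‖y‖ ^ 2) y v = _
    simp [this.fderiv]
  have hderiv₂ (v : E) : fderiv ℝ (fun y ↦ fderiv ℝ (fun y ↦ g (‖y‖ ^ 2)) y v) x v =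
      4 * deriv (deriv g) (‖x‖ ^ 2) * ⟪x, v⟫ ^ 2 + 2 * deriv g (‖x‖ ^ 2) * ‖v‖ ^ 2 := by
    simp only [hderiv]
    have hinner : HasFDerivAt (fun y ↦ 2 * ⟪y, v⟫) ((2 : ℝ) • innerSL ℝ v) x := by
      simpa [real_inner_comm] using ((innerSL ℝ v).hasFDerivAt (x := x)).const_mul 2
    have := ((hg'.differentiable one_ne_zero (‖x‖ ^ 2)).hasDerivAt.comp_hasFDerivAt x
      (hasStrictFDerivAt_norm_sq x).hasFDerivAt).mul hinner
    change fderiv ℝ ((deriv g ∘ fun y : E ↦ ‖y‖ ^ 2) * fun y ↦ 2 * ⟪y, v⟫) x v = _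
    rw [this.fderiv]
    simp
    ring
  have hu : ContDiff ℝ 2 fun y : E ↦ g (‖y‖ ^ 2) := hg.comp (contDiff_norm_sq ℝ)
  rw [laplacian_eq_sum_fderiv_fderiv (stdOrthonormalBasis ℝ E) hu]
  simp only [hderiv₂, Finset.sum_add_distrib, ← Finset.mul_sum, OrthonormalBasis.norm_eq_one,
    OrthonormalBasis.sum_sq_inner_left]
  simp
  ring

end Laplacian

section BallTorsion

variable {E : Type*} [NormedAddCommGroup E]

/-- The function `z ↦ (1 - ‖z‖²)₊ / 2`, whose gradient is `-z` inside the unit ball and `0`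
outside. Integrating by parts against it turns radial derivatives into Laplacians. -/
noncomputable def ballTorsion (z : E) : ℝ :=
  (1 - min ‖z‖ 1 ^ 2) / 2

theorem lipschitzWith_ballTorsion : LipschitzWith 1 (ballTorsion : E → ℝ) := by
  refine LipschitzWith.of_dist_le_mul fun x y ↦ ?_
  have hmin : |min ‖y‖ 1 - min ‖x‖ 1| ≤ dist x y := by
    rw [dist_comm, dist_eq_norm]
    exact (abs_min_sub_min_le_max _ _ _ _).trans (by simpa using abs_norm_sub_norm_le y x)
  have hsum : |(min ‖x‖ 1 + min ‖y‖ 1) / 2| ≤ 1 := by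
    rw [abs_of_nonneg (by positivity)]
    linarith [min_le_right ‖x‖ 1, min_le_right ‖y‖ 1]
  calc dist (ballTorsion x) (ballTorsion y)
      = |min ‖y‖ 1 - min ‖x‖ 1| * |(min ‖x‖ 1 + min ‖y‖ 1) / 2| := by
        rw [Real.dist_eq, ballTorsion, ballTorsion, ← abs_mul]
        ring_nf
    _ ≤ |min ‖y‖ 1 - min ‖x‖ 1| * 1 := by gcongr
    _ ≤ (1 : NNReal) * dist x y := by simpa using hmin

theorem ballTorsion_nonneg (z : E) : 0 ≤ ballTorsion z := by
  have : min ‖z‖ 1 ^ 2 ≤ 1 := pow_le_one₀ (by positivity) (min_le_right _ _)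
  unfold ballTorsion
  linarith

theorem ballTorsion_of_one_le_norm {z : E} (hz : 1 ≤ ‖z‖) : ballTorsion z = 0 := by
  simp [ballTorsion, hz]

theorem hasCompactSupport_ballTorsion [ProperSpace E] : HasCompactSupport (ballTorsion : E → ℝ) :=
  .intro (isCompact_closedBall 0 1) fun z hz ↦
    ballTorsion_of_one_le_norm (by simpa using (not_le.1 (mt mem_closedBall_zero_iff.2 hz)).le)

variable [InnerProductSpace ℝ E]

theorem lineDeriv_ballTorsion_of_norm_lt_one {z : E} (hz : ‖z‖ < 1) (v : E) :
    lineDeriv ℝ ballTorsion z v = -⟪z, v⟫ := by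
  have h_sq : HasFDerivAt (fun y : E ↦ (1 - ‖y‖ ^ 2) * 2⁻¹) (-innerSL ℝ z) z := by
    refine (((hasStrictFDerivAt_norm_sq z).hasFDerivAt.const_sub 1).mul_const 2⁻¹).congr_fderiv ?_
    ext; simp
  have : HasFDerivAt ballTorsion (-innerSL ℝ z) z := by
    refine h_sq.congr_of_eventuallyEq ?_
    filter_upwards [isOpen_ball.mem_nhds (mem_ball_zero_iff.2 hz)] with y hy
    rw [ballTorsion, min_eq_left (mem_ball_zero_iff.1 hy).le, div_eq_mul_inv]
  rw [this.differentiableAt.lineDeriv_eq_fderiv, this.fderiv]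
  simp

theorem lineDeriv_ballTorsion_of_one_lt_norm {z : E} (hz : 1 < ‖z‖) (v : E) :
    lineDeriv ℝ ballTorsion z v = 0 := by
  have : ballTorsion =ᶠ[𝓝 z] 0 := by
    filter_upwards [continuous_norm.continuousAt.eventually (lt_mem_nhds hz)] with y hy
    exact ballTorsion_of_one_le_norm hy.le
  rw [this.lineDeriv_eq]
  simp [lineDeriv]

end BallTorsion

section MeanValue

variable {E : Type*} [NormedAddCommGroup E] [InnerProductSpace ℝ E] [FiniteDimensional ℝ E]
  [MeasurableSpace E] [BorelSpace E]

theorem setIntegral_ball_inner_mul {h : E → ℝ} {C : NNReal} (hh : LipschitzWith C h) (v : E) :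
    ∫ z in ball 0 1, ⟪z, v⟫ * h z = ∫ z, ballTorsion z * lineDeriv ℝ h z v := by
  have ibp := hh.integral_lineDeriv_mul_eq (μ := volume) lipschitzWith_ballTorsion
    hasCompactSupport_ballTorsion v
  simp_rw [mul_comm (ballTorsion _)]
  rw [ibp, ← integral_indicator measurableSet_ball]
  refine integral_congr_ae ?_
  have h_sphere : ∀ᵐ z : E, z ∉ sphere 0 1 :=
    measure_eq_zero_iff_ae_notMem.1 (Measure.addHaar_sphere_of_ne_zero _ _ one_ne_zero)
  filter_upwards [h_sphere] with z hz
  rcases lt_trichotomy ‖z‖ 1 with hlt | heq | hgt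
  · rw [Set.indicator_of_mem (mem_ball_zero_iff.2 hlt),
      lineDeriv_ballTorsion_of_norm_lt_one hlt, inner_neg_right, neg_neg]
  · exact absurd (mem_sphere_zero_iff_norm.2 heq) hz
  · rw [Set.indicator_of_notMem (by simpa using hgt.le),
      lineDeriv_ballTorsion_of_one_lt_norm hgt, zero_mul]

theorem setIntegral_ball_inner_mul_comp_smul {g : E → ℝ} (hg : ContDiff ℝ 1 g)
    (hc : HasCompactSupport g) (x v : E) (s : ℝ) :
    ∫ z in ball 0 1, ⟪z, v⟫ * g (x + s • z) =
      s * ∫ z, ballTorsion z * fderiv ℝ g (x + s • z) v := by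
  obtain ⟨C, hC⟩ := hg.lipschitzWith_of_hasCompactSupport hc one_ne_zero
  have h_affine : LipschitzWith ‖s‖₊ fun z : E ↦ x + s • z := by
    simpa using (LipschitzWith.const x).add (lipschitzWith_smul s)
  refine (setIntegral_ball_inner_mul (hC.comp h_affine) v).trans ?_
  rw [← integral_const_mul]
  refine integral_congr_ae (.of_forall fun z ↦ ?_)
  have h_comp : HasFDerivAt (g ∘ fun z ↦ x + s • z)
      ((fderiv ℝ g (x + s • z)).comp (s • ContinuousLinearMap.id ℝ E)) z :=
    (hg.differentiable one_ne_zero _).hasFDerivAt.comp z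
      (((hasFDerivAt_id z).const_smul s).const_add x)
  beta_reduce
  rw [h_comp.differentiableAt.lineDeriv_eq_fderiv, h_comp.fderiv]
  simp
  ring

theorem integrableOn_ball_of_continuous {f : E → ℝ} (hf : Continuous f) (x : E) (r : ℝ) :
    IntegrableOn f (ball x r) :=
  (hf.continuousOn.integrableOn_compact (isCompact_closedBall x r)).mono_set
    ball_subset_closedBall

theorem integrable_ballTorsion_mul {f : E → ℝ} (hf : Continuous f) :
    Integrable fun z ↦ ballTorsion z * f z :=
  (lipschitzWith_ballTorsion.continuous.mul hf).integrable_of_hasCompactSupport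
    hasCompactSupport_ballTorsion.mul_right

theorem setIntegral_ball_fderiv_comp_smul {u : E → ℝ} (hu : ContDiff ℝ 2 u)
    (hc : HasCompactSupport u) (x : E) (s : ℝ) :
    ∫ z in ball 0 1, fderiv ℝ u (x + s • z) z = s * ∫ z, ballTorsion z * Δ u (x + s • z) := by
  let b := stdOrthonormalBasis ℝ E
  have hdu (i) : ContDiff ℝ 1 fun y ↦ fderiv ℝ u y (b i) :=
    (hu.fderiv_right (m := 1) le_rfl).clm_apply contDiff_const
  have h_expand (z : E) :
      fderiv ℝ u (x + s • z) z = ∑ i, ⟪z, b i⟫ * fderiv ℝ u (x + s • z) (b i) := by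
    conv_lhs => rw [← b.sum_repr' z, map_sum]
    simp_rw [map_smul, smul_eq_mul, b.sum_repr', real_inner_comm]
  simp_rw [h_expand, laplacian_eq_sum_fderiv_fderiv b hu, Finset.mul_sum]
  rw [integral_finsetSum, integral_finsetSum, Finset.mul_sum]
  · exact Finset.sum_congr rfl fun i _ ↦
      setIntegral_ball_inner_mul_comp_smul (hdu i) (hc.fderiv_apply ℝ _) x (b i) s
  · exact fun i _ ↦ integrable_ballTorsion_mul <|
      (((hdu i).continuous_fderiv one_ne_zero).clm_apply continuous_const).comp
        (by fun_prop : Continuous fun z ↦ x + s • z)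
  · exact fun i _ ↦ integrableOn_ball_of_continuous
      ((by fun_prop : Continuous fun z ↦ ⟪z, b i⟫).mul
        ((hdu i).continuous.comp (by fun_prop : Continuous fun z ↦ x + s • z))) 0 1

theorem hasDerivAt_setIntegral_ball_comp_smul {u : E → ℝ} (hu : ContDiff ℝ 2 u)
    (hc : HasCompactSupport u) (x : E) (s : ℝ) :
    HasDerivAt (fun s : ℝ ↦ ∫ z in ball 0 1, u (x + s • z))
      (s * ∫ z, ballTorsion z * Δ u (x + s • z)) s := by
  have hdu : Continuous (fderiv ℝ u) := hu.continuous_fderiv two_ne_zero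
  obtain ⟨M, hM⟩ := hdu.bounded_above_of_compact_support (hc.fderiv ℝ)
  have : IsFiniteMeasure ((volume : Measure E).restrict (ball 0 1)) :=
    ⟨by simpa using measure_ball_lt_top⟩
  have hu_affine (t : ℝ) : IntegrableOn (fun z : E ↦ u (x + t • z)) (ball 0 1) :=
    integrableOn_ball_of_continuous (hu.continuous.comp (by fun_prop)) 0 1
  have hdu_affine : Continuous fun z : E ↦ fderiv ℝ u (x + s • z) z :=
    (hdu.comp (by fun_prop : Continuous fun z : E ↦ x + s • z)).clm_apply continuous_id
  have h_bound : ∀ᵐ z : E ∂volume.restrict (ball 0 1), ∀ t ∈ (Set.univ : Set ℝ),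
      ‖fderiv ℝ u (x + t • z) z‖ ≤ M := by
    filter_upwards [ae_restrict_mem measurableSet_ball] with z hz t _
    exact (ContinuousLinearMap.le_of_opNorm_le_of_le _ (hM _) (mem_ball_zero_iff.1 hz).le).trans
      (mul_one M).le
  have h_diff : ∀ᵐ z : E ∂volume.restrict (ball 0 1), ∀ t ∈ (Set.univ : Set ℝ),
      HasDerivAt (fun t : ℝ ↦ u (x + t • z)) (fderiv ℝ u (x + t • z) z) t := by
    refine .of_forall fun z t _ ↦ ?_
    have h_line : HasDerivAt (fun t : ℝ ↦ x + t • z) z t := by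
      simpa using ((hasDerivAt_id t).smul_const z).const_add x
    exact (hu.differentiable two_ne_zero _).hasFDerivAt.comp_hasDerivAt t h_line
  rw [← setIntegral_ball_fderiv_comp_smul hu hc x s]
  exact (hasDerivAt_integral_of_dominated_loc_of_deriv_le Filter.univ_mem
    (.of_forall fun t ↦ (hu_affine t).aestronglyMeasurable) (hu_affine s)
    (integrableOn_ball_of_continuous hdu_affine 0 1).aestronglyMeasurable h_bound
    (integrable_const M) h_diff).2

theorem setAverage_ball_eq (u : E → ℝ) (x : E) {r : ℝ} (hr : 0 < r) :
    ⨍ y in ball x r, u y = ⨍ z in ball 0 1, u (x + r • z) := by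
  have h_image : (fun z : E ↦ x + z) ⁻¹' ball x r = r • ball 0 1 := by
    ext; simp [_root_.smul_ball hr.ne', abs_of_pos hr]
  rw [setAverage_eq, setAverage_eq, Measure.setIntegral_comp_smul_of_pos volume
      (fun z ↦ u (x + z)) _ hr, ← h_image, ← (measurePreserving_add_left volume
      x).setIntegral_preimage_emb (MeasurableEquiv.addLeft x).measurableEmbedding,
    measureReal_def, Measure.addHaar_ball_of_pos _ _ hr, ENNReal.toReal_mul,
    ENNReal.toReal_ofReal (by positivity), ← measureReal_def]
  simp only [smul_eq_mul, mul_inv]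
  ring

theorem real_volume_ball_pos (x : E) {r : ℝ} (hr : 0 < r) : 0 < volume.real (ball x r) :=
  ENNReal.toReal_pos (measure_ball_pos _ _ hr).ne' measure_ball_lt_top.ne

theorem le_setAverage_ball_of_hasCompactSupport {u : E → ℝ} (hu : ContDiff ℝ 2 u)
    (hc : HasCompactSupport u) {x : E} {r : ℝ} (hr : 0 < r) (hΔ : ∀ y ∈ ball x r, 0 ≤ Δ u y) :
    u x ≤ ⨍ y in ball x r, u y := by
  have hderiv := hasDerivAt_setIntegral_ball_comp_smul hu hc x
  have h_mono : MonotoneOn (fun s : ℝ ↦ ∫ z in ball 0 1, u (x + s • z)) (Set.Icc 0 r) := by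
    refine monotoneOn_of_deriv_nonneg (convex_Icc 0 r)
      (fun s _ ↦ (hderiv s).continuousAt.continuousWithinAt)
      (fun s _ ↦ (hderiv s).differentiableAt.differentiableWithinAt) fun s hs ↦ ?_
    rw [interior_Icc] at hs
    rw [(hderiv s).deriv]
    refine mul_nonneg hs.1.le (integral_nonneg fun z ↦ ?_)
    rcases le_or_gt 1 ‖z‖ with hz | hz
    · simp [ballTorsion_of_one_le_norm hz]
    · refine mul_nonneg (ballTorsion_nonneg z) (hΔ _ ?_)
      simpa [norm_smul, abs_of_pos hs.1] using
        (mul_le_of_le_one_right hs.1.le hz.le).trans_lt hs.2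
  have h_le := h_mono (Set.left_mem_Icc.2 hr.le) (Set.right_mem_Icc.2 hr.le) hr.le
  rw [setAverage_ball_eq u x hr, setAverage_eq, smul_eq_mul,
    le_inv_mul_iff₀ (real_volume_ball_pos 0 one_pos)]
  simpa using h_le

theorem le_setAverage_ball_of_laplacian_nonneg {u : E → ℝ} (hu : ContDiff ℝ 2 u) {x : E} {r : ℝ}
    (hr : 0 < r) (hΔ : ∀ y ∈ ball x r, 0 ≤ Δ u y) : u x ≤ ⨍ y in ball x r, u y := by
  let χ : ContDiffBump x := ⟨r, r + 1, hr, by linarith⟩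
  have h_eq : ∀ y ∈ ball x r, χ y * u y = u y := fun y hy ↦ by
    rw [χ.one_of_mem_closedBall (ball_subset_closedBall hy), one_mul]
  have h := le_setAverage_ball_of_hasCompactSupport (χ.contDiff.mul hu)
    χ.hasCompactSupport.mul_right hr fun y hy ↦ by
      rw [(InnerProductSpace.laplacian_congr_nhds (f₁ := fun y ↦ χ y * u y) (f₂ := u) <| by
        filter_upwards [isOpen_ball.mem_nhds hy] using h_eq).eq_of_nhds]
      exact hΔ y hy
  rwa [h_eq x (mem_ball_self hr), setAverage_congr_fun measurableSet_ball
    (.of_forall h_eq)] at h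

end MeanValue

section Convolution

variable {E : Type*} [NormedAddCommGroup E] [InnerProductSpace ℝ E] [FiniteDimensional ℝ E]

theorem laplacian_comp_sub_left {u : E → ℝ} (hu : ContDiff ℝ 2 u) (x y : E) :
    Δ (fun z ↦ u (x - z)) y = Δ u (x - y) := by
  have hderiv {g : E → ℝ} (hg : Differentiable ℝ g) (v z : E) :
      fderiv ℝ (fun z ↦ g (x - z)) z v = -fderiv ℝ g (x - z) v := by
    have := (hg (x - z)).hasFDerivAt.comp z ((hasFDerivAt_id z).const_sub x)
    change fderiv ℝ (g ∘ fun z ↦ x - id z) z v = _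
    simp [this.fderiv]
  have hdu (v : E) : Differentiable ℝ fun z ↦ fderiv ℝ u z v :=
    ((hu.fderiv_right (m := 1) le_rfl).clm_apply contDiff_const).differentiable one_ne_zero
  let b := stdOrthonormalBasis ℝ E
  have hu_sub : ContDiff ℝ 2 fun z ↦ u (x - z) := hu.comp (contDiff_const.sub contDiff_id)
  rw [laplacian_eq_sum_fderiv_fderiv b hu_sub, laplacian_eq_sum_fderiv_fderiv b hu]
  refine Finset.sum_congr rfl fun i _ ↦ ?_
  simp only [hderiv (hu.differentiable two_ne_zero), fderiv_fun_neg, neg_apply,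
    hderiv (hdu (b i)), neg_neg]

theorem laplacian_eq_zero_of_notMem_tsupport {u : E → ℝ} {x : E} (hx : x ∉ tsupport u) :
    Δ u x = 0 := by
  rw [notMem_tsupport_iff_eventuallyEq] at hx
  rw [(InnerProductSpace.laplacian_congr_nhds hx).eq_of_nhds]
  exact congrFun (InnerProductSpace.laplacian_const (c := (0 : ℝ))) x

theorem hasCompactSupport_laplacian {u : E → ℝ} (hu : HasCompactSupport u) :
    HasCompactSupport (Δ u) :=
  .intro hu fun _ ↦ laplacian_eq_zero_of_notMem_tsupport

variable [MeasurableSpace E] [BorelSpace E]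

theorem fderiv_convolution_left_apply {ρ f : E → ℝ} (hρ : ContDiff ℝ 1 ρ)
    (hc : HasCompactSupport ρ) (hf : LocallyIntegrable f) (x v : E) :
    fderiv ℝ (ρ ⋆[lsmul ℝ ℝ] f) x v = ((fun y ↦ fderiv ℝ ρ y v) ⋆[lsmul ℝ ℝ] f) x := by
  rw [(hc.hasFDerivAt_convolution_left (lsmul ℝ ℝ) hρ hf x).fderiv, convolution,
    ContinuousLinearMap.integral_apply]
  · rfl
  · exact (hc.fderiv ℝ).convolutionExists_left _ (hρ.continuous_fderiv one_ne_zero) hf x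

theorem laplacian_convolution_left {ρ f : E → ℝ} (hρ : ContDiff ℝ 2 ρ)
    (hc : HasCompactSupport ρ) (hf : LocallyIntegrable f) :
    Δ (ρ ⋆[lsmul ℝ ℝ] f) = Δ ρ ⋆[lsmul ℝ ℝ] f := by
  ext x
  let b := stdOrthonormalBasis ℝ E
  have hdρ (v : E) : ContDiff ℝ 1 fun y ↦ fderiv ℝ ρ y v :=
    (hρ.fderiv_right (m := 1) le_rfl).clm_apply contDiff_const
  have h_second (v : E) : fderiv ℝ (fun y ↦ fderiv ℝ (ρ ⋆[lsmul ℝ ℝ] f) y v) x v =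
      ((fun y ↦ fderiv ℝ (fun y ↦ fderiv ℝ ρ y v) y v) ⋆[lsmul ℝ ℝ] f) x := by
    simp_rw [fderiv_convolution_left_apply (hρ.of_le one_le_two) hc hf]
    exact fderiv_convolution_left_apply (hdρ v) (hc.fderiv_apply ℝ v) hf x v
  rw [laplacian_eq_sum_fderiv_fderiv b (hc.contDiff_convolution_left _ hρ hf)]
  simp_rw [h_second, convolution, laplacian_eq_sum_fderiv_fderiv b hρ, map_sum,
    FunLike.coe_sum, Finset.sum_apply]
  refine (integral_finsetSum _ fun i _ ↦ ?_).symm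
  exact ((hc.fderiv_apply ℝ (b i)).fderiv_apply ℝ (b i)).convolutionExists_left (lsmul ℝ ℝ)
    (((hdρ (b i)).continuous_fderiv one_ne_zero).clm_apply continuous_const) hf x

theorem setIntegral_ball_comp_sub_right (f : E → ℝ) (x t : E) (r : ℝ) :
    ∫ y in ball x r, f (y - t) = ∫ y in ball (x - t) r, f y := by
  have h_preimage : (fun y ↦ y - t) ⁻¹' ball (x - t) r = ball x r := by
    ext; simp [dist_eq_norm]
  rw [← h_preimage]
  exact (measurePreserving_sub_right volume t).setIntegral_preimage_emb
    (MeasurableEquiv.subRight t).measurableEmbedding f _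

theorem integrable_ball_prod_convolution {ρ f : E → ℝ} (hρ : Continuous ρ)
    (hc : HasCompactSupport ρ) (hf : LocallyIntegrable f) (x : E) (r : ℝ) :
    Integrable (fun p : E × E ↦ ρ p.2 * f (p.1 - p.2))
      ((volume.restrict (ball x r)).prod volume) := by
  obtain ⟨R, hR⟩ := hc.isCompact.isBounded.subset_closedBall 0
  let K := closedBall x (r + R)
  have h_trunc : Integrable (fun p : E × E ↦ ρ p.2 * K.indicator f (p.1 - p.2))
      (volume.prod volume) :=
    (hρ.integrable_of_hasCompactSupport hc (μ := volume)).convolution_integrand (lsmul ℝ ℝ) <|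
      (hf.integrableOn_isCompact (isCompact_closedBall x _)).integrable_indicator
        measurableSet_closedBall
  have h_restrict : ((volume : Measure E).restrict (ball x r)).prod (volume : Measure E) =
      (volume.prod volume).restrict (ball x r ×ˢ Set.univ) := by
    rw [← Measure.prod_restrict, Measure.restrict_univ]
  rw [h_restrict]
  refine h_trunc.integrableOn.congr_fun ?_ (measurableSet_ball.prod .univ)
  rintro ⟨y, t⟩ ⟨hy, -⟩
  by_cases ht : t ∈ tsupport ρ
  · have hyt : y - t ∈ K := by
      rw [mem_closedBall, dist_eq_norm, sub_right_comm]
      exact (norm_sub_le _ _).trans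
        (add_le_add (mem_ball_iff_norm.1 hy).le (by simpa using hR ht))
    simp only [Set.indicator_of_mem hyt]
  · simp only [image_eq_zero_of_notMem_tsupport ht, zero_mul]

theorem setAverage_ball_convolution {ρ f : E → ℝ} (hρ : Continuous ρ)
    (hc : HasCompactSupport ρ) (hf : LocallyIntegrable f) (x : E) (r : ℝ) :
    ⨍ y in ball x r, (ρ ⋆[lsmul ℝ ℝ] f) y =
      (ρ ⋆[lsmul ℝ ℝ] fun y ↦ ⨍ z in ball y r, f z) x := by
  have h_fubini : ∫ y in ball x r, ∫ t, ρ t * f (y - t) =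
      ∫ t, ρ t * ∫ y in ball (x - t) r, f y := by
    rw [integral_integral_swap (integrable_ball_prod_convolution hρ hc hf x r)]
    simp_rw [integral_const_mul, setIntegral_ball_comp_sub_right]
  have h_volume (y : E) : volume.real (ball y r) = volume.real (ball (0 : E) r) := by
    simp only [measureReal_def, Measure.addHaar_ball_center]
  simp_rw [convolution, setAverage_eq, h_volume, ContinuousLinearMap.lsmul_apply, smul_eq_mul]
  rw [h_fubini, ← integral_const_mul]
  exact integral_congr_ae (.of_forall fun t ↦ mul_left_comm _ _ _)

theorem continuous_setAverage_ball {f : E → ℝ} (hf : Continuous f) {r : ℝ} (hr : 0 < r) :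
    Continuous fun x ↦ ⨍ y in ball x r, f y := by
  have h_ball : ball (0 : E) 1 =ᵐ[volume] closedBall 0 1 := by
    rw [← ball_union_sphere]
    refine (union_ae_eq_left_of_ae_eq_empty (μ := volume)
      (ae_eq_empty.2 (Measure.addHaar_sphere_of_ne_zero volume 0 one_ne_zero))).symm
  simp_rw [setAverage_ball_eq f _ hr, setAverage_congr h_ball, setAverage_eq, smul_eq_mul]
  have h_integral : Continuous fun x : E ↦ ∫ z in closedBall (0 : E) 1, f (x + r • z) :=
    continuous_parametric_integral_of_continuous (f := fun x z : E ↦ f (x + r • z)) (by fun_prop)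
      (isCompact_closedBall 0 1)
  exact continuous_const.mul h_integral

end Convolution

section DistribSubharmonic

variable {E : Type*} [NormedAddCommGroup E] [InnerProductSpace ℝ E] [FiniteDimensional ℝ E]
  [MeasurableSpace E] [BorelSpace E]

/-- `φ` is subharmonic on `U` in the sense of distributions: it pairs nonnegatively with the
Laplacian of every nonnegative test function supported in `U`. -/
def IsDistribSubharmonicOn (φ : E → ℝ) (U : Set E) : Prop :=
  ∀ ψ : E → ℝ, ContDiff ℝ ∞ ψ → HasCompactSupport ψ → tsupport ψ ⊆ U → (∀ x, 0 ≤ ψ x) →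
    0 ≤ ∫ x in U, φ x * Δ ψ x

theorem IsDistribSubharmonicOn.laplacian_convolution_nonneg {φ ρ : E → ℝ} {U : Set E}
    (h : IsDistribSubharmonicOn φ U) (hφ : LocallyIntegrable φ) (hρ : ContDiff ℝ ∞ ρ)
    (hρ_nonneg : ∀ x, 0 ≤ ρ x) {δ : ℝ} (hρ_supp : tsupport ρ ⊆ closedBall 0 δ) {y : E}
    (hy : closedBall y δ ⊆ U) : 0 ≤ Δ (ρ ⋆[lsmul ℝ ℝ] φ) y := by
  let ψ : E → ℝ := fun z ↦ ρ (y - z)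
  have hc : HasCompactSupport ρ :=
    (isCompact_closedBall 0 δ).of_isClosed_subset (isClosed_tsupport _) hρ_supp
  have hρ₂ : ContDiff ℝ 2 ρ := hρ.of_le (by norm_cast)
  have hψ_supp : tsupport ψ ⊆ closedBall y δ := by
    refine closure_minimal (fun z hz ↦ ?_) isClosed_closedBall
    simpa [dist_eq_norm, norm_sub_rev] using hρ_supp (subset_tsupport ρ hz)
  have hψ_test := h ψ (hρ.comp (contDiff_const.sub contDiff_id))
    ((isCompact_closedBall y δ).of_isClosed_subset (isClosed_tsupport _) hψ_supp)
    (hψ_supp.trans hy) fun z ↦ hρ_nonneg _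
  rw [setIntegral_eq_integral_of_forall_compl_eq_zero fun z hz ↦ by
    rw [laplacian_eq_zero_of_notMem_tsupport fun hzψ ↦ hz (hy (hψ_supp hzψ)), mul_zero]] at hψ_test
  simp_rw [ψ, laplacian_comp_sub_left hρ₂] at hψ_test
  rw [laplacian_convolution_left hρ₂ hc hφ, convolution_lsmul_swap]
  simpa only [smul_eq_mul, mul_comm] using hψ_test

theorem IsDistribSubharmonicOn.le_setAverage_ball {φ : E → ℝ} {U : Set E}
    (h : IsDistribSubharmonicOn φ U) (hφ : Continuous φ) (hU : IsOpen U) {x : E} {r : ℝ}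
    (hr : 0 < r) (hxr : closedBall x r ⊆ U) : φ x ≤ ⨍ y in ball x r, φ y := by
  obtain ⟨δ, hδ, hδU⟩ := (isCompact_closedBall x r).exists_cthickening_subset_open hU hxr
  let ρ (n : ℕ) : ContDiffBump (0 : E) :=
    ⟨δ / (n + 1) / 2, δ / (n + 1), by positivity, half_lt_self (by positivity)⟩
  have hρ_lim : Filter.Tendsto (fun n ↦ (ρ n).rOut) .atTop (𝓝 0) :=
    tendsto_const_div_atTop_nhds_zero_nat δ |>.comp (Filter.tendsto_add_atTop_nat 1) |>.congr
      fun n ↦ by simp [ρ]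
  refine le_of_tendsto_of_tendsto'
    (ContDiffBump.convolution_tendsto_right_of_continuous (μ := volume) hρ_lim hφ x)
    (ContDiffBump.convolution_tendsto_right_of_continuous (μ := volume) hρ_lim
      (continuous_setAverage_ball hφ hr) x) fun n ↦ ?_
  rw [← setAverage_ball_convolution (ρ n).continuous_normed (ρ n).hasCompactSupport_normed
    hφ.locallyIntegrable]
  refine le_setAverage_ball_of_laplacian_nonneg
    ((ρ n).hasCompactSupport_normed.contDiff_convolution_left _ (ρ n).contDiff_normed
      hφ.locallyIntegrable) hr fun y hy ↦ ?_
  refine h.laplacian_convolution_nonneg hφ.locallyIntegrable (ρ n).contDiff_normed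
    (ρ n).nonneg_normed (ρ n).tsupport_normed_eq.le ?_
  have hρδ : (ρ n).rOut ≤ δ := div_le_self hδ.le (by simp)
  exact (closedBall_subset_closedBall hρδ).trans <|
    (closedBall_subset_cthickening (ball_subset_closedBall hy) δ).trans hδU

end DistribSubharmonic

section SetAverage

variable {α : Type*} [MeasurableSpace α] {μ : Measure α} {s : Set α} {f g : α → ℝ}

theorem setAverage_add (hf : IntegrableOn f s μ) (hg : IntegrableOn g s μ) :
    ⨍ x in s, (f x + g x) ∂μ = ⨍ x in s, f x ∂μ + ⨍ x in s, g x ∂μ := by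
  simp_rw [setAverage_eq, integral_add hf hg, smul_add]

theorem setAverage_const_mul (c : ℝ) : ⨍ x in s, c * f x ∂μ = c * ⨍ x in s, f x ∂μ := by
  simp_rw [setAverage_eq, integral_const_mul, smul_eq_mul, mul_left_comm]

theorem setAverage_mono_on (hf : IntegrableOn f s μ) (hg : IntegrableOn g s μ)
    (hs : MeasurableSet s) (h : ∀ x ∈ s, f x ≤ g x) : ⨍ x in s, f x ∂μ ≤ ⨍ x in s, g x ∂μ := by
  simp_rw [setAverage_eq, smul_eq_mul]
  exact mul_le_mul_of_nonneg_left (setIntegral_mono_on hf hg hs h) (by positivity)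

theorem setAverage_nonneg (hs : MeasurableSet s) (h : ∀ x ∈ s, 0 ≤ f x) : 0 ≤ ⨍ x in s, f x ∂μ := by
  rw [setAverage_eq]
  exact smul_nonneg (by positivity) (setIntegral_nonneg hs h)

end SetAverage

section QuantitativeMeanValue

variable {E : Type*} [NormedAddCommGroup E] [InnerProductSpace ℝ E] [FiniteDimensional ℝ E]
  [MeasurableSpace E] [BorelSpace E]

variable (E) in
/-- The mean of `‖z‖ ^ 2` over the unit ball, that is `d / (d + 2)` in dimension `d`: the variance
of one step of a random walk that jumps uniformly into the unit ball. -/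
noncomputable def ballMeanSq : ℝ :=
  ⨍ z in ball (0 : E) 1, ‖z‖ ^ 2

theorem ballMeanSq_pos [Nontrivial E] : 0 < ballMeanSq E := by
  rw [ballMeanSq, setAverage_eq]
  refine mul_pos (inv_pos.2 (real_volume_ball_pos 0 one_pos)) ?_
  rw [setIntegral_pos_iff_support_of_nonneg_ae (.of_forall fun z ↦ by positivity)
    (integrableOn_ball_of_continuous (by fun_prop) 0 1)]
  have h_support : (Function.support fun z : E ↦ ‖z‖ ^ 2) = {0}ᶜ := by
    ext; simp
  rw [h_support, Set.inter_comm, ← Set.sdiff_eq, measure_sdiff_null (measure_singleton 0)]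
  exact measure_ball_pos _ _ one_pos

theorem ballMeanSq_nonneg : 0 ≤ ballMeanSq E :=
  integral_nonneg fun _ ↦ by positivity

theorem setAverage_ball_inner (v : E) : ⨍ z in ball (0 : E) 1, ⟪v, z⟫ = 0 := by
  have h := setIntegral_ball_inner_mul (LipschitzWith.const (1 : ℝ)) v
  simp only [lineDeriv, deriv_const, mul_one, mul_zero, integral_zero] at h
  simp_rw [setAverage_eq, real_inner_comm _ v, h, smul_zero]

theorem setAverage_ball_norm_sub_sq (x z : E) {r : ℝ} (hr : 0 < r) :
    ⨍ y in ball x r, ‖y - z‖ ^ 2 = ‖x - z‖ ^ 2 + r ^ 2 * ballMeanSq E := by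
  have h_expand (y : E) : ‖x + r • y - z‖ ^ 2 =
      ‖x - z‖ ^ 2 + (2 * r * ⟪x - z, y⟫ + r ^ 2 * ‖y‖ ^ 2) := by
    rw [add_sub_right_comm, norm_add_sq_real, real_inner_smul_right, norm_smul, mul_pow,
      Real.norm_eq_abs, sq_abs]
    ring
  have h_int {f : E → ℝ} (hf : Continuous f) := integrableOn_ball_of_continuous hf 0 1
  rw [setAverage_ball_eq _ _ hr]
  simp_rw [h_expand]
  rw [setAverage_add (h_int (by fun_prop)) (h_int (by fun_prop)),
    setAverage_add (h_int (by fun_prop)) (h_int (by fun_prop)), setAverage_const_mul,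
    setAverage_const_mul, setAverage_ball_inner,
    setAverage_const (measure_ball_pos _ _ one_pos).ne' measure_ball_lt_top.ne, ballMeanSq]
  ring

theorem setAverage_ball_const_sub_norm_sub_sq (c : ℝ) (x z : E) {r : ℝ} (hr : 0 < r) :
    ⨍ y in ball x r, (c - ‖y - z‖ ^ 2) = c - ‖x - z‖ ^ 2 - r ^ 2 * ballMeanSq E := by
  have h_int {f : E → ℝ} (hf : Continuous f) := integrableOn_ball_of_continuous hf x r
  simp_rw [sub_eq_add_neg c, ← neg_one_mul (‖_‖ ^ 2)]
  rw [setAverage_add (h_int (by fun_prop)) (h_int (by fun_prop)), setAverage_const_mul,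
    setAverage_const (measure_ball_pos _ _ hr).ne' measure_ball_lt_top.ne,
    setAverage_ball_norm_sub_sq x z hr]
  ring

theorem add_le_setAverage_ball_of_le_laplacian {u : E → ℝ} (hu : ContDiff ℝ 2 u)
    {x : E} {r : ℝ} (hr : 0 < r) {c : ℝ} (hΔ : ∀ y ∈ ball x r, 2 * Module.finrank ℝ E * c ≤ Δ u y) :
    u x + c * r ^ 2 * ballMeanSq E ≤ ⨍ y in ball x r, u y := by
  have h_sq : ContDiff ℝ 2 fun y : E ↦ -c * ‖y‖ ^ 2 := contDiff_const.mul (contDiff_norm_sq ℝ)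
  have hΔ_sq (y : E) : Δ (fun y : E ↦ -c * ‖y‖ ^ 2) y = -(2 * Module.finrank ℝ E * c) := by
    have h_deriv : deriv (fun t : ℝ ↦ -c * t) = fun _ ↦ -c := by ext; simp
    rw [laplacian_comp_norm_sq (g := fun t ↦ -c * t) (by fun_prop), h_deriv]
    simp
  have h_mean := le_setAverage_ball_of_laplacian_nonneg (hu.add h_sq) (x := x) hr fun y hy ↦ by
    change 0 ≤ Δ (u + _) y
    rw [hu.contDiffAt.laplacian_add h_sq.contDiffAt, hΔ_sq]
    linarith [hΔ y hy]
  have h_mean_sq := setAverage_ball_norm_sub_sq x 0 hr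
  simp only [sub_zero] at h_mean_sq
  rw [setAverage_add (integrableOn_ball_of_continuous hu.continuous x r)
    (integrableOn_ball_of_continuous h_sq.continuous x r), setAverage_const_mul,
    h_mean_sq] at h_mean
  linarith

theorem add_setAverage_ball_le_of_laplacian_le {u : E → ℝ} (hu : ContDiff ℝ 2 u)
    {x : E} {r : ℝ} (hr : 0 < r) {c : ℝ}
    (hΔ : ∀ y ∈ ball x r, Δ u y ≤ -(2 * Module.finrank ℝ E * c)) :
    c * r ^ 2 * ballMeanSq E + ⨍ y in ball x r, u y ≤ u x := by
  have h := add_le_setAverage_ball_of_le_laplacian hu.neg hr (c := c) fun y hy ↦ by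
    change _ ≤ Δ (-u) y
    rw [InnerProductSpace.laplacian_neg]
    simpa using le_neg_of_le_neg (hΔ y hy)
  rw [average_neg] at h
  linarith

end QuantitativeMeanValue

section Potential

variable {α : Type*} [MeasurableSpace α] {μ : Measure α} {k : α → α → ℝ≥0∞} {a u v : α → ℝ≥0∞}

/-- The integral operator with kernel `k`; for a walk whose jumps from `x` have density `k x`,
this is the one-step transition operator. -/
noncomputable def transitionOp (μ : Measure α) (k : α → α → ℝ≥0∞) (u : α → ℝ≥0∞) (x : α) : ℝ≥0∞ :=
  ∫⁻ y, k x y * u y ∂μ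

/-- The potential of the charge `a`: the expected total charge collected by the walk with
transition densities `k`. -/
noncomputable def potential (μ : Measure α) (k : α → α → ℝ≥0∞) (a : α → ℝ≥0∞) (x : α) : ℝ≥0∞ :=
  ∑' n, (transitionOp μ k)^[n] a x

theorem transitionOp_mono (h : u ≤ v) : transitionOp μ k u ≤ transitionOp μ k v :=
  fun _ ↦ lintegral_mono fun y ↦ mul_le_mul_right (h y) _

theorem transitionOp_const_mul {c : ℝ≥0∞} (hc : c ≠ ⊤) (x : α) :
    transitionOp μ k (fun y ↦ c * u y) x = c * transitionOp μ k u x := by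
  simp_rw [transitionOp, mul_left_comm _ c, lintegral_const_mul' _ _ hc]

theorem transitionOp_add (hk : Measurable k.uncurry) (hu : Measurable u) (x : α) :
    transitionOp μ k (fun y ↦ u y + v y) x = transitionOp μ k u x + transitionOp μ k v x := by
  simp_rw [transitionOp, mul_add]
  exact lintegral_add_left (hk.of_uncurry_left.mul hu) _

theorem transitionOp_tsum (hk : Measurable k.uncurry) {f : ℕ → α → ℝ≥0∞}
    (hf : ∀ n, Measurable (f n)) (x : α) :
    transitionOp μ k (fun y ↦ ∑' n, f n y) x = ∑' n, transitionOp μ k (f n) x := by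
  simp_rw [transitionOp, ← ENNReal.tsum_mul_left]
  exact lintegral_tsum fun n ↦ (hk.of_uncurry_left.mul (hf n)).aemeasurable

theorem transitionOp_sum (hk : Measurable k.uncurry) {f : ℕ → α → ℝ≥0∞}
    (hf : ∀ n, Measurable (f n)) (n : ℕ) (x : α) :
    transitionOp μ k (fun y ↦ ∑ i ∈ Finset.range n, f i y) x =
      ∑ i ∈ Finset.range n, transitionOp μ k (f i) x := by
  simp_rw [transitionOp, Finset.mul_sum]
  exact lintegral_finsetSum _ fun i _ ↦ hk.of_uncurry_left.mul (hf i)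

variable [SFinite μ]

theorem measurable_transitionOp (hk : Measurable k.uncurry) (hu : Measurable u) :
    Measurable (transitionOp μ k u) :=
  (hk.mul (hu.comp measurable_snd)).lintegral_prod_right'

theorem measurable_transitionOp_iterate (hk : Measurable k.uncurry) (ha : Measurable a) (n : ℕ) :
    Measurable ((transitionOp μ k)^[n] a) := by
  induction n with
  | zero => exact ha
  | succ n ih =>
    rw [Function.iterate_succ_apply']
    exact measurable_transitionOp hk ih

theorem measurable_potential (hk : Measurable k.uncurry) (ha : Measurable a) :
    Measurable (potential μ k a) :=
  .tsum (measurable_transitionOp_iterate hk ha)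

theorem potential_eq_add_transitionOp (hk : Measurable k.uncurry) (ha : Measurable a) (x : α) :
    potential μ k a x = a x + transitionOp μ k (potential μ k a) x := by
  refine (tsum_eq_zero_add' ENNReal.summable).trans ?_
  simp_rw [Function.iterate_succ_apply']
  exact congrArg (a x + ·) (transitionOp_tsum hk (measurable_transitionOp_iterate hk ha) x).symm

theorem sum_range_succ_transitionOp_iterate (hk : Measurable k.uncurry) (ha : Measurable a) (n : ℕ)
    (x : α) : ∑ i ∈ Finset.range (n + 1), (transitionOp μ k)^[i] a x =
      a x + transitionOp μ k (fun y ↦ ∑ i ∈ Finset.range n, (transitionOp μ k)^[i] a y) x := by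
  rw [Finset.sum_range_succ', add_comm,
    transitionOp_sum hk (measurable_transitionOp_iterate hk ha)]
  simp_rw [Function.iterate_succ_apply']
  rfl

theorem potential_le (hk : Measurable k.uncurry) (ha : Measurable a)
    (h : ∀ x, a x + transitionOp μ k v x ≤ v x) : potential μ k a ≤ v := by
  have h_partial (n : ℕ) (x : α) : ∑ i ∈ Finset.range n, (transitionOp μ k)^[i] a x ≤ v x := by
    induction n generalizing x with
    | zero => simp
    | succ n ih =>
      rw [sum_range_succ_transitionOp_iterate hk ha]
      exact (add_le_add_right (transitionOp_mono ih x) _).trans (h x)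
  intro x
  rw [potential, ENNReal.tsum_eq_iSup_nat]
  exact iSup_le fun n ↦ h_partial n x

theorem le_potential (hk : Measurable k.uncurry) (ha : Measurable a) {b : α → ℝ≥0∞} {M : ℝ≥0∞}
    (hM : M ≠ ⊤) (hba : ∀ x, b x ≤ M * a x) (h : ∀ x, b x ≤ a x + transitionOp μ k b x) {x : α}
    (hfin : potential μ k a x ≠ ⊤) : b x ≤ potential μ k a x := by
  have h_partial (n : ℕ) (x : α) : b x ≤
      ∑ i ∈ Finset.range n, (transitionOp μ k)^[i] a x + (transitionOp μ k)^[n] b x := by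
    induction n generalizing x with
    | zero => simp
    | succ n ih =>
      rw [sum_range_succ_transitionOp_iterate hk ha, add_assoc, Function.iterate_succ_apply',
        ← transitionOp_add hk (Finset.measurable_fun_sum _ fun i _ ↦
          measurable_transitionOp_iterate hk ha i)]
      exact (h x).trans (add_le_add_right (transitionOp_mono ih x) _)
  have h_tail (n : ℕ) (x : α) :
      (transitionOp μ k)^[n] b x ≤ M * (transitionOp μ k)^[n] a x := by
    induction n generalizing x with
    | zero => exact hba x
    | succ n ih =>
      simp_rw [Function.iterate_succ_apply']
      exact (transitionOp_mono ih x).trans_eq (transitionOp_const_mul hM x)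
  have h_lim : Filter.Tendsto (fun n ↦ potential μ k a x + M * (transitionOp μ k)^[n] a x)
      .atTop (𝓝 (potential μ k a x + M * 0)) :=
    tendsto_const_nhds.add <|
      ENNReal.Tendsto.const_mul (ENNReal.tendsto_atTop_zero_of_tsum_ne_top hfin) (.inr hM)
  rw [mul_zero, add_zero] at h_lim
  exact ge_of_tendsto' h_lim fun n ↦
    (h_partial n x).trans (add_le_add (ENNReal.sum_le_tsum _) (h_tail n x))

theorem lintegral_mul_transitionOp_comm (hk : Measurable k.uncurry) (hsymm : ∀ x y, k x y = k y x)
    (hu : Measurable u) (hv : Measurable v) :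
    ∫⁻ x, u x * transitionOp μ k v x ∂μ = ∫⁻ x, v x * transitionOp μ k u x ∂μ := by
  have h_expand {u v : α → ℝ≥0∞} (hv : Measurable v) (x : α) :
      u x * transitionOp μ k v x = ∫⁻ y, u x * (k x y * v y) ∂μ :=
    (lintegral_const_mul _ (hk.of_uncurry_left.mul hv)).symm
  simp_rw [h_expand hu, h_expand hv]
  rw [lintegral_lintegral_swap
    ((hu.comp measurable_fst).mul (hk.mul (hv.comp measurable_snd))).aemeasurable]
  refine lintegral_congr fun y ↦ lintegral_congr fun x ↦ ?_
  rw [hsymm, mul_left_comm, mul_comm (u x), mul_left_comm]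

theorem lintegral_mul_potential_comm (hk : Measurable k.uncurry) (hsymm : ∀ x y, k x y = k y x)
    (hu : Measurable u) (hv : Measurable v) :
    ∫⁻ x, u x * potential μ k v x ∂μ = ∫⁻ x, v x * potential μ k u x ∂μ := by
  have h_iterate {v : α → ℝ≥0∞} (hv : Measurable v) (n : ℕ) :
      ∫⁻ x, u x * (transitionOp μ k)^[n] v x ∂μ = ∫⁻ x, v x * (transitionOp μ k)^[n] u x ∂μ := by
    induction n generalizing v with
    | zero => simp [mul_comm]
    | succ n ih =>
      rw [Function.iterate_succ_apply, ih (measurable_transitionOp hk hv),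
        Function.iterate_succ_apply', lintegral_mul_transitionOp_comm hk hsymm hv
          (measurable_transitionOp_iterate hk hu n)]
      simp_rw [mul_comm]
  have h_tsum {u v : α → ℝ≥0∞} (hu : Measurable u) (hv : Measurable v) :
      ∫⁻ x, u x * potential μ k v x ∂μ = ∑' n, ∫⁻ x, u x * (transitionOp μ k)^[n] v x ∂μ := by
    simp_rw [potential, ← ENNReal.tsum_mul_left]
    exact lintegral_tsum fun n ↦ (hu.mul (measurable_transitionOp_iterate hk hv n)).aemeasurable
  simp_rw [h_tsum hu hv, h_tsum hv hu, h_iterate hv]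

end Potential

section BallWalk

variable {E : Type*} [NormedAddCommGroup E]

/-- The points of `Ω` at distance at least `ε` from its complement. -/
def innerParallelSet (Ω : Set E) (ε : ℝ) : Set E :=
  {x | ball x ε ⊆ Ω}

theorem innerParallelSet_subset (Ω : Set E) {ε : ℝ} (hε : 0 < ε) : innerParallelSet Ω ε ⊆ Ω :=
  fun _ hx ↦ hx (mem_ball_self hε)

theorem innerParallelSet_anti (Ω : Set E) {ε r : ℝ} (h : ε ≤ r) :
    innerParallelSet Ω r ⊆ innerParallelSet Ω ε :=
  fun _ hx ↦ (ball_subset_ball h).trans hx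

theorem isClosed_innerParallelSet (Ω : Set E) (ε : ℝ) : IsClosed (innerParallelSet Ω ε) := by
  have h : innerParallelSet Ω ε = (thickening ε Ωᶜ)ᶜ := by
    ext x
    simp only [innerParallelSet, Set.mem_ofPred_eq, Set.mem_compl_iff, mem_thickening_iff,
      Set.subset_def, mem_ball']
    grind
  rw [h]
  exact isOpen_thickening.isClosed_compl

variable [InnerProductSpace ℝ E] [FiniteDimensional ℝ E] [MeasurableSpace E] [BorelSpace E]

open scoped Classical in
/-- Transition density of the walk that jumps from `x` to a uniformly distributed point of
`ball x ε` and is killed as soon as it leaves `innerParallelSet Ω ε`. Killing it there, rather than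
outside `Ω`, makes the kernel symmetric. -/
noncomputable def ballWalkKernel (Ω : Set E) (ε : ℝ) (x y : E) : ℝ≥0∞ :=
  if x ∈ innerParallelSet Ω ε ∧ y ∈ innerParallelSet Ω ε ∧ dist x y < ε then
    (volume (ball (0 : E) ε))⁻¹ else 0

/-- The expected time that the walk with kernel `ballWalkKernel Ω ε` spends in `D`, where a step
takes the time `ε ^ 2 * ballMeanSq E` by which it increases `‖x‖ ^ 2` on average. -/
noncomputable def occupationTime (Ω : Set E) (ε : ℝ) (D : Set E) : E → ℝ≥0∞ :=
  potential volume (ballWalkKernel Ω ε) (D.indicator fun _ ↦ .ofReal (ε ^ 2 * ballMeanSq E))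

theorem ballWalkKernel_comm (Ω : Set E) (ε : ℝ) (x y : E) :
    ballWalkKernel Ω ε x y = ballWalkKernel Ω ε y x := by
  rw [ballWalkKernel, ballWalkKernel, dist_comm y x]
  congr 1
  exact propext and_left_comm

theorem measurable_ballWalkKernel (Ω : Set E) (ε : ℝ) :
    Measurable (ballWalkKernel Ω ε).uncurry := by
  have hG := (isClosed_innerParallelSet Ω ε).measurableSet
  classical
  exact .ite ((measurable_fst hG).inter ((measurable_snd hG).inter
    (measurableSet_lt (measurable_fst.dist measurable_snd) measurable_const)))
    measurable_const measurable_const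

theorem transitionOp_ballWalkKernel_of_notMem {Ω : Set E} {ε : ℝ} {x : E}
    (hx : x ∉ innerParallelSet Ω ε) (u : E → ℝ≥0∞) :
    transitionOp volume (ballWalkKernel Ω ε) u x = 0 := by
  simp [transitionOp, ballWalkKernel, hx]

theorem transitionOp_ballWalkKernel_of_mem {Ω : Set E} {ε : ℝ} (hε : 0 < ε) {x : E}
    (hx : x ∈ innerParallelSet Ω ε) (u : E → ℝ≥0∞) :
    transitionOp volume (ballWalkKernel Ω ε) u x =
      ⨍⁻ y in ball x ε, (innerParallelSet Ω ε).indicator u y ∂volume := by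
  have h_vol : (volume (ball (0 : E) ε))⁻¹ ≠ ⊤ := by
    simpa using (measure_ball_pos volume (0 : E) hε).ne'
  rw [setLAverage_eq, Measure.addHaar_ball_center, div_eq_mul_inv, mul_comm,
    ← lintegral_const_mul' _ _ h_vol, ← lintegral_indicator measurableSet_ball]
  refine lintegral_congr fun y ↦ ?_
  by_cases hy : y ∈ innerParallelSet Ω ε <;> by_cases hxy : dist y x < ε <;>
    simp [ballWalkKernel, Set.indicator, hx, hy, hxy, dist_comm x y]

theorem transitionOp_ballWalkKernel_ofReal_le {Ω : Set E} {ε : ℝ} (hε : 0 < ε) {x : E}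
    (hx : x ∈ innerParallelSet Ω ε) {f : E → ℝ} (hf : IntegrableOn f (ball x ε))
    (hf_nonneg : ∀ y ∈ ball x ε, 0 ≤ f y) :
    transitionOp volume (ballWalkKernel Ω ε) (fun y ↦ .ofReal (f y)) x ≤
      .ofReal (⨍ y in ball x ε, f y) := by
  rw [transitionOp_ballWalkKernel_of_mem hε hx, ofReal_setAverage hf
    (ae_restrict_of_forall_mem measurableSet_ball hf_nonneg), ← setLAverage_eq]
  exact laverage_mono_ae (.of_forall fun y ↦ Set.indicator_le_self _ _ y)

theorem measurable_occupationTime (Ω : Set E) (ε : ℝ) {D : Set E} (hD : MeasurableSet D) :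
    Measurable (occupationTime Ω ε D) :=
  measurable_potential (measurable_ballWalkKernel Ω ε) (measurable_const.indicator hD)

theorem occupationTime_le {Ω D : Set E} {ε : ℝ} (hD : MeasurableSet D)
    (hDΩ : D ⊆ innerParallelSet Ω ε) {v : E → ℝ≥0∞}
    (hv : ∀ x ∈ innerParallelSet Ω ε, D.indicator (fun _ ↦ .ofReal (ε ^ 2 * ballMeanSq E)) x +
      transitionOp volume (ballWalkKernel Ω ε) v x ≤ v x) (x : E) :
    occupationTime Ω ε D x ≤ v x := by
  refine potential_le (measurable_ballWalkKernel Ω ε) (measurable_const.indicator hD)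
    (fun x ↦ ?_) x
  by_cases hx : x ∈ innerParallelSet Ω ε
  · exact hv x hx
  · rw [transitionOp_ballWalkKernel_of_notMem hx, Set.indicator_of_notMem (mt (@hDΩ x) hx)]
    simp

theorem ofReal_add_transitionOp_one_sub_norm_sq_le {Ω : Set E} {ε : ℝ} (hε : 0 < ε)
    (hΩ : Ω ⊆ ball 0 1) {x : E} (hx : x ∈ innerParallelSet Ω ε) :
    .ofReal (ε ^ 2 * ballMeanSq E) +
      transitionOp volume (ballWalkKernel Ω ε) (fun y ↦ .ofReal (1 - ‖y‖ ^ 2)) x ≤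
      .ofReal (1 - ‖x‖ ^ 2) := by
  have h_int := integrableOn_ball_of_continuous (E := E) (f := fun y ↦ 1 - ‖y‖ ^ 2)
    (by fun_prop) x ε
  have h_nonneg : ∀ y ∈ ball x ε, 0 ≤ 1 - ‖y‖ ^ 2 := fun y hy ↦
    sub_nonneg.2 (pow_le_one₀ (norm_nonneg y) (mem_ball_zero_iff.1 (hΩ (hx hy))).le)
  have h_mean := setAverage_ball_const_sub_norm_sub_sq 1 x 0 hε
  simp only [sub_zero] at h_mean
  calc _ ≤ ENNReal.ofReal (ε ^ 2 * ballMeanSq E) + .ofReal (⨍ y in ball x ε, (1 - ‖y‖ ^ 2)) :=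
        add_le_add_right (transitionOp_ballWalkKernel_ofReal_le hε hx h_int h_nonneg) _
    _ = .ofReal (1 - ‖x‖ ^ 2) := by
      rw [← ENNReal.ofReal_add (mul_nonneg (sq_nonneg ε) ballMeanSq_nonneg)
        (setAverage_nonneg measurableSet_ball h_nonneg), h_mean]
      ring_nf

theorem occupationTime_le_one_sub_norm_sq {Ω D : Set E} {ε : ℝ} (hε : 0 < ε) (hΩ : Ω ⊆ ball 0 1)
    (hD : MeasurableSet D) (hDΩ : D ⊆ innerParallelSet Ω ε) (x : E) :
    occupationTime Ω ε D x ≤ .ofReal (1 - ‖x‖ ^ 2) :=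
  occupationTime_le hD hDΩ (fun _ hx ↦ (add_le_add_left (Set.indicator_le_self _ _ _) _).trans
    (ofReal_add_transitionOp_one_sub_norm_sq_le hε hΩ hx)) x

theorem occupationTime_le_ofReal_of_setAverage_le {Ω D : Set E} {ε : ℝ} (hε : 0 < ε)
    (hΩ : Ω ⊆ ball 0 1) (hD : MeasurableSet D) (hDΩ : D ⊆ innerParallelSet Ω ε) {f : E → ℝ}
    (hf_nonneg : ∀ x ∈ Ω, 0 ≤ f x)
    (hf_int : ∀ x ∈ innerParallelSet Ω ε, IntegrableOn f (ball x ε))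
    (hf_mean : ∀ x ∈ innerParallelSet Ω ε, ⨍ y in ball x ε, f y ≤ f x)
    (hfD : ∀ x ∈ D, 1 ≤ f x) (x : E) : occupationTime Ω ε D x ≤ .ofReal (f x) := by
  refine (occupationTime_le hD hDΩ (v := fun x ↦ min (.ofReal (1 - ‖x‖ ^ 2)) (.ofReal (f x)))
    (fun x hx ↦ ?_) x).trans (min_le_right _ _)
  have h_le_one_sub : D.indicator (fun _ ↦ .ofReal (ε ^ 2 * ballMeanSq E)) x +
      transitionOp volume (ballWalkKernel Ω ε)
        (fun x ↦ min (.ofReal (1 - ‖x‖ ^ 2)) (.ofReal (f x))) x ≤ .ofReal (1 - ‖x‖ ^ 2) :=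
    (add_le_add (Set.indicator_le_self _ _ _)
      (transitionOp_mono (fun _ ↦ min_le_left _ _) x)).trans
      (ofReal_add_transitionOp_one_sub_norm_sq_le hε hΩ hx)
  refine le_min h_le_one_sub ?_
  by_cases hxD : x ∈ D
  · refine h_le_one_sub.trans (ENNReal.ofReal_le_ofReal ?_)
    linarith [hfD x hxD, sq_nonneg ‖x‖]
  · rw [Set.indicator_of_notMem hxD, zero_add]
    exact ((transitionOp_mono (fun _ ↦ min_le_right _ _) x).trans
      (transitionOp_ballWalkKernel_ofReal_le hε hx (hf_int x hx) fun y hy ↦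
        hf_nonneg y (hx hy))).trans (ENNReal.ofReal_le_ofReal (hf_mean x hx))

theorem setLAverage_occupationTime_le {Ω D : Set E} {ε : ℝ} (hε : 0 < ε)
    (hD : MeasurableSet D) (hDΩ : D ⊆ innerParallelSet Ω ε) {x : E}
    (hx : x ∈ innerParallelSet Ω ε) :
    ⨍⁻ y in ball x ε, occupationTime Ω ε D y ∂volume ≤ occupationTime Ω ε D x := by
  have h_off : (innerParallelSet Ω ε).indicator (occupationTime Ω ε D) = occupationTime Ω ε D := by
    refine Set.indicator_eq_self.2 fun y hy ↦ by_contra fun hyG ↦ hy ?_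
    refine nonpos_iff_eq_zero.1 ((occupationTime_le hD hDΩ
      (v := (innerParallelSet Ω ε).indicator ⊤) ?_ y).trans ?_)
    · intro z hz
      simp [Set.indicator_of_mem hz]
    · simp [hyG]
  rw [← h_off, ← transitionOp_ballWalkKernel_of_mem hε hx, h_off]
  exact le_add_self.trans_eq (potential_eq_add_transitionOp (measurable_ballWalkKernel Ω ε)
    (measurable_const.indicator hD) x).symm

theorem ofReal_sq_sub_norm_sub_sq_le_setLAverage {R : ℝ} {ε : ℝ} (hε : 0 < ε) (x z : E) :
    .ofReal (R ^ 2 - ‖x - z‖ ^ 2) ≤ .ofReal (ε ^ 2 * ballMeanSq E) +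
      ⨍⁻ y in ball x ε, .ofReal (R ^ 2 - ‖y - z‖ ^ 2) ∂volume := by
  have h_int {f : E → ℝ} (hf : Continuous f) := integrableOn_ball_of_continuous hf x ε
  have h_max_int := h_int (f := fun y ↦ max (R ^ 2 - ‖y - z‖ ^ 2) 0) (by fun_prop)
  have h_avg : ⨍⁻ y in ball x ε, .ofReal (R ^ 2 - ‖y - z‖ ^ 2) ∂volume =
      .ofReal (⨍ y in ball x ε, max (R ^ 2 - ‖y - z‖ ^ 2) 0) := by
    rw [ofReal_setAverage h_max_int (.of_forall fun _ ↦ le_max_right _ _), ← setLAverage_eq]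
    simp_rw [ENNReal.ofReal_max, ENNReal.ofReal_zero, max_eq_left zero_le]
  rw [h_avg]
  refine (ENNReal.ofReal_le_ofReal ?_).trans ENNReal.ofReal_add_le
  have h_mono := setAverage_mono_on (h_int (by fun_prop)) h_max_int measurableSet_ball
    fun y _ ↦ le_max_left (R ^ 2 - ‖y - z‖ ^ 2) 0
  rw [setAverage_ball_const_sub_norm_sub_sq _ x z hε] at h_mono
  linarith

theorem ofReal_sq_sub_norm_sub_sq_le_occupationTime [Nontrivial E] {Ω D : Set E} {ε : ℝ}
    (hε : 0 < ε) (hΩ : Ω ⊆ ball 0 1) (hD : MeasurableSet D) (hDΩ : D ⊆ innerParallelSet Ω ε)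
    {z : E} {R : ℝ} (hR : 0 ≤ R) (hz : ball z R ⊆ D) (x : E) :
    .ofReal (R ^ 2 - ‖x - z‖ ^ 2) ≤ occupationTime Ω ε D x := by
  have h_step : 0 < ε ^ 2 * ballMeanSq E := mul_pos (pow_pos hε 2) ballMeanSq_pos
  have h_mem {x : E} (hx : ENNReal.ofReal (R ^ 2 - ‖x - z‖ ^ 2) ≠ 0) : x ∈ D := by
    refine hz (mem_ball_iff_norm.2 (lt_of_pow_lt_pow_left₀ 2 hR ?_))
    simpa using hx
  refine le_potential (b := fun x ↦ .ofReal (R ^ 2 - ‖x - z‖ ^ 2))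
    (M := .ofReal (R ^ 2 / (ε ^ 2 * ballMeanSq E))) (measurable_ballWalkKernel Ω ε)
    (measurable_const.indicator hD) ENNReal.ofReal_ne_top (fun x ↦ ?_) (fun x ↦ ?_)
    (ne_top_of_le_ne_top ENNReal.ofReal_ne_top
      (occupationTime_le_one_sub_norm_sq hε hΩ hD hDΩ x))
  all_goals
    rcases eq_or_ne (ENNReal.ofReal (R ^ 2 - ‖x - z‖ ^ 2)) 0 with hx | hx
    · exact hx ▸ zero_le
    rw [Set.indicator_of_mem (h_mem hx)]
  · rw [← ENNReal.ofReal_mul (by positivity), div_mul_cancel₀ _ h_step.ne']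
    exact ENNReal.ofReal_le_ofReal (sub_le_self _ (sq_nonneg _))
  · rw [transitionOp_ballWalkKernel_of_mem hε (hDΩ (h_mem hx)),
      Set.indicator_eq_self.2 fun y hy ↦ hDΩ (h_mem hy)]
    exact ofReal_sq_sub_norm_sub_sq_le_setLAverage hε x z

theorem setLIntegral_occupationTime_comm [Nontrivial E] (Ω : Set E) {ε : ℝ} (hε : 0 < ε)
    {B D : Set E} (hB : MeasurableSet B) (hD : MeasurableSet D) :
    ∫⁻ x in B, occupationTime Ω ε D x = ∫⁻ x in D, occupationTime Ω ε B x := by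
  have h_step : ENNReal.ofReal (ε ^ 2 * ballMeanSq E) ≠ 0 := by
    simpa using mul_pos (pow_pos hε 2) ballMeanSq_pos
  have h_indicator {A : Set E} (hA : MeasurableSet A) (u : E → ℝ≥0∞) :
      ∫⁻ x, A.indicator (fun _ ↦ .ofReal (ε ^ 2 * ballMeanSq E)) x * u x =
        .ofReal (ε ^ 2 * ballMeanSq E) * ∫⁻ x in A, u x := by
    rw [← lintegral_const_mul' _ _ ENNReal.ofReal_ne_top, ← lintegral_indicator hA]
    simp_rw [Set.indicator_mul_left]
  rw [← ENNReal.mul_right_inj h_step ENNReal.ofReal_ne_top, ← h_indicator hB, ← h_indicator hD]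
  exact lintegral_mul_potential_comm (measurable_ballWalkKernel Ω ε) (ballWalkKernel_comm Ω ε)
    (measurable_const.indicator hB) (measurable_const.indicator hD)

end BallWalk

section PositiveHarmonic

variable {E : Type*} [NormedAddCommGroup E] [InnerProductSpace ℝ E] [MeasurableSpace E]
  [BorelSpace E] [FiniteDimensional ℝ E]

theorem real_volume_ball (x : E) {r : ℝ} (hr : 0 < r) :
    volume.real (ball x r) = r ^ Module.finrank ℝ E * volume.real (ball (0 : E) 1) := by
  rw [measureReal_def, Measure.addHaar_ball_of_pos _ _ hr, ENNReal.toReal_mul,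
    ENNReal.toReal_ofReal (by positivity), measureReal_def]

/-- `w` is a positive harmonic function on `Ω`. Harmonicity is expressed by the mean value property
on all balls contained in `Ω`. -/
structure IsPositiveHarmonicOn (w : E → ℝ) (Ω : Set E) : Prop where
  pos : ∀ x ∈ Ω, 0 < w x
  eq_setAverage : ∀ x r, 0 < r → ball x r ⊆ Ω → w x = ⨍ y in ball x r, w y

namespace IsPositiveHarmonicOn

variable {w : E → ℝ} {Ω D : Set E} {x y : E} {r R σ ε : ℝ}

theorem integrableOn_ball (hw : IsPositiveHarmonicOn w Ω) (hr : 0 < r) (hx : ball x r ⊆ Ω) :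
    IntegrableOn w (ball x r) := by
  -- otherwise the integral, hence `w x`, would be `0`
  by_contra h
  have h_zero := hw.eq_setAverage x r hr hx
  rw [setAverage_eq, integral_undef h, smul_zero] at h_zero
  exact (hw.pos x (hx (mem_ball_self hr))).ne' h_zero

theorem harnack (hw : IsPositiveHarmonicOn w Ω) (hr : 0 < r) (hyx : ball y r ⊆ ball x R)
    (hx : ball x R ⊆ Ω) : w y ≤ (R / r) ^ Module.finrank ℝ E * w x := by
  have hR : 0 < R := pos_of_mem_ball (hyx (mem_ball_self hr))
  have h_mono : ∫ z in ball y r, w z ≤ ∫ z in ball x R, w z :=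
    setIntegral_mono_set (hw.integrableOn_ball hR hx)
      (ae_restrict_of_forall_mem measurableSet_ball fun z hz ↦ (hw.pos z (hx hz)).le)
      hyx.eventuallyLE
  have h_unit := real_volume_ball_pos (0 : E) one_pos
  rw [hw.eq_setAverage y r hr (hyx.trans hx), hw.eq_setAverage x R hR hx, setAverage_eq,
    setAverage_eq, real_volume_ball y hr, real_volume_ball x hR, smul_eq_mul, smul_eq_mul, div_pow]
  calc _ ≤ (r ^ Module.finrank ℝ E * volume.real (ball (0 : E) 1))⁻¹ * ∫ z in ball x R, w z := by
        gcongr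
    _ = _ := by field_simp

/-- By Harnack, a multiple of `w` exceeds `1` on `ball x σ` and so bounds the time spent there by a
walk started in `D`. By symmetry of the walk, this controls the time spent in `D` by a walk started
in `ball x σ`. -/
theorem setLIntegral_occupationTime_le [Nontrivial E] (hw : IsPositiveHarmonicOn w Ω)
    (hΩ : Ω ⊆ ball 0 1) (hD : MeasurableSet D) (hDΩ : D ⊆ innerParallelSet Ω ε)
    (hwD : ∀ y ∈ D, w y ≤ 1) (hε : 0 < ε) (hεσ : ε ≤ σ) (hx : ball x (3 * σ) ⊆ Ω) :
    ∫⁻ y in ball x σ, occupationTime Ω ε D y ≤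
      .ofReal (2 ^ Module.finrank ℝ E / w x) * volume (ball (0 : E) 1) := by
  have hσ : 0 < σ := hε.trans_le hεσ
  have hwx : 0 < w x := hw.pos x (hx (mem_ball_self (by positivity)))
  set M := 2 ^ Module.finrank ℝ E / w x with hM
  have h_harnack : ∀ y ∈ ball x σ, 1 ≤ M * w y := fun y hy ↦ by
    rw [mem_ball] at hy
    have h := hw.harnack (y := x) (x := y) (R := 2 * σ) hσ
      (ball_subset_ball' (by rw [dist_comm]; linarith))
      ((ball_subset_ball' (by linarith)).trans hx)
    rw [mul_div_cancel_right₀ _ hσ.ne'] at h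
    rwa [hM, div_mul_eq_mul_div, one_le_div hwx]
  have h_ball : ball x σ ⊆ innerParallelSet Ω ε := fun y hy ↦
    (ball_subset_ball' (by linarith [mem_ball.1 hy])).trans hx
  have h_occ : ∀ y ∈ D, occupationTime Ω ε (ball x σ) y ≤ .ofReal M := fun y hy ↦
    (occupationTime_le_ofReal_of_setAverage_le hε hΩ measurableSet_ball h_ball
      (f := fun y ↦ M * w y) (fun y hy ↦ mul_nonneg (by positivity) (hw.pos y hy).le)
      (fun y hy ↦ (hw.integrableOn_ball hε hy).const_mul M)
      (fun y hy ↦ by rw [setAverage_const_mul, ← hw.eq_setAverage y ε hε hy])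
      h_harnack y).trans
      (ENNReal.ofReal_le_ofReal (mul_le_of_le_one_right (by positivity) (hwD y hy)))
  calc ∫⁻ y in ball x σ, occupationTime Ω ε D y
      = ∫⁻ y in D, occupationTime Ω ε (ball x σ) y :=
        setLIntegral_occupationTime_comm Ω hε measurableSet_ball hD
    _ ≤ ∫⁻ _ in D, .ofReal M := setLIntegral_mono measurable_const h_occ
    _ ≤ .ofReal M * volume (ball (0 : E) 1) := by
      rw [setLIntegral_const]
      gcongr
      exact (hDΩ.trans (innerParallelSet_subset Ω hε)).trans hΩ

end IsPositiveHarmonicOn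

end PositiveHarmonic

section MollifiedSupermean

variable {E : Type*} [NormedAddCommGroup E] [InnerProductSpace ℝ E] [FiniteDimensional ℝ E]
  [MeasurableSpace E] [BorelSpace E] {ρ f : E → ℝ} {x : E} {ε : ℝ}

theorem setAverage_ball_convolution_le (hρ : Continuous ρ) (hc : HasCompactSupport ρ)
    (hρ_nonneg : ∀ t, 0 ≤ ρ t) (hf : LocallyIntegrable f)
    (h : ∀ t ∈ Function.support ρ, ⨍ y in ball (x - t) ε, f y ≤ f (x - t)) :
    ⨍ y in ball x ε, (ρ ⋆[lsmul ℝ ℝ] f) y ≤ (ρ ⋆[lsmul ℝ ℝ] f) x := by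
  have h_int : Integrable fun t ↦ ρ t * ⨍ y in ball (x - t) ε, f y := by
    refine ((integrable_ball_prod_convolution hρ hc hf x ε).integral_prod_right.const_mul
      (volume.real (ball x ε))⁻¹).congr (.of_forall fun t ↦ ?_)
    simp only [integral_const_mul, setIntegral_ball_comp_sub_right, setAverage_eq, smul_eq_mul,
      measureReal_def, Measure.addHaar_ball_center]
    ring
  rw [setAverage_ball_convolution hρ hc hf]
  refine integral_mono h_int (hc.convolutionExists_left _ hρ hf x) fun t ↦ ?_
  by_cases ht : t ∈ Function.support ρ
  · exact mul_le_mul_of_nonneg_left (h t ht) (hρ_nonneg t)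
  · simp [Function.notMem_support.1 ht]

theorem exists_forall_abs_laplacian_convolution_sub_le (hρ : ContDiff ℝ 2 ρ)
    (hc : HasCompactSupport ρ) {A c : ℝ} (hA : 0 < A) (hc_pos : 0 < c) :
    ∃ τ > 0, ∀ f : E → ℝ, Integrable f → ∫ y, |f y| ≤ A → ∀ x y, dist x y < τ →
      |Δ (ρ ⋆[lsmul ℝ ℝ] f) x - Δ (ρ ⋆[lsmul ℝ ℝ] f) y| ≤ c := by
  obtain ⟨τ, hτ, h_unif⟩ := Metric.uniformContinuous_iff.1
    ((hasCompactSupport_laplacian hc).uniformContinuous_of_continuous (continuous_laplacian hρ))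
    (c / A) (by positivity)
  refine ⟨τ, hτ, fun f hf hfA x y hxy ↦ ?_⟩
  have h_int (x : E) : Integrable fun z ↦ Δ ρ (x - z) * f z := by
    simpa using ((hasCompactSupport_laplacian hc).convolutionExists_left (lsmul ℝ ℝ)
      (continuous_laplacian hρ) hf.locallyIntegrable x).integrable_swap
  have h_swap (x : E) : Δ (ρ ⋆[lsmul ℝ ℝ] f) x = ∫ z, Δ ρ (x - z) * f z := by
    rw [laplacian_convolution_left hρ hc hf.locallyIntegrable, convolution_lsmul_swap]
    rfl
  rw [h_swap, h_swap, ← integral_sub (h_int x) (h_int y), ← Real.norm_eq_abs]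
  calc _ ≤ ∫ z, c / A * |f z| := by
        refine norm_integral_le_of_norm_le (hf.abs.const_mul _) (.of_forall fun z ↦ ?_)
        rw [← sub_mul, norm_mul, ← dist_eq_norm]
        exact mul_le_mul_of_nonneg_right (h_unif (by rwa [dist_sub_right])).le (abs_nonneg _)
    _ ≤ c := by
      rw [integral_const_mul]
      exact (mul_le_mul_of_nonneg_left hfA (by positivity)).trans_eq (div_mul_cancel₀ c hA.ne')

theorem laplacian_le_of_setAverage_ball_le [Nontrivial E] {u : E → ℝ} (hu : ContDiff ℝ 2 u)
    (hε : 0 < ε) {c : ℝ} (h_osc : ∀ y ∈ ball x ε, Δ u x - Δ u y ≤ c)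
    (h_mean : ⨍ y in ball x ε, u y ≤ u x) : Δ u x ≤ c := by
  have h_dim : (0 : ℝ) < Module.finrank ℝ E := by exact_mod_cast Module.finrank_pos
  by_contra! h_lt
  set s := (Δ u x - c) / (2 * Module.finrank ℝ E) with hs
  have hs_pos : 0 < s := div_pos (sub_pos.2 h_lt) (by positivity)
  have h := add_le_setAverage_ball_of_le_laplacian (c := s) hu hε fun y hy ↦ by
    rw [hs, mul_div_cancel₀ _ (by positivity)]
    linarith [h_osc y hy]
  have h_gain := mul_pos (mul_pos hs_pos (pow_pos hε 2)) (ballMeanSq_pos (E := E))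
  linarith

variable (φ : ContDiffBump (0 : E))

theorem le_normed_convolution (hf : LocallyIntegrable f) {c : ℝ}
    (h : ∀ y ∈ ball x φ.rOut, c ≤ f y) : c ≤ (φ.normed volume ⋆[lsmul ℝ ℝ] f) x := by
  have h_exists := (φ.hasCompactSupport_normed (μ := volume)).convolutionExists_left (lsmul ℝ ℝ)
    φ.continuous_normed hf x
  have h_mono := integral_mono (φ.integrable_normed.mul_const c) h_exists fun t ↦ ?_
  · rwa [integral_mul_const, φ.integral_normed, one_mul] at h_mono
  by_cases ht : t ∈ ball (0 : E) φ.rOut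
  · exact mul_le_mul_of_nonneg_left (h _ (by simpa using ht)) (φ.nonneg_normed t)
  · rw [← φ.support_normed_eq (μ := volume), Function.notMem_support] at ht
    simp [ht]

theorem normed_convolution_le (hf : Integrable f) (hf_nonneg : ∀ y, 0 ≤ f y) (x : E) :
    (φ.normed volume ⋆[lsmul ℝ ℝ] f) x ≤
      (∫ y in ball x φ.rOut, f y) / volume.real (closedBall (0 : E) φ.rIn) := by
  have h_exists := (φ.hasCompactSupport_normed (μ := volume)).convolutionExists_left (lsmul ℝ ℝ)
    φ.continuous_normed hf.locallyIntegrable x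
  rw [convolution_lsmul_swap, div_eq_mul_inv, mul_comm, ← integral_const_mul,
    ← integral_indicator measurableSet_ball]
  refine integral_mono h_exists.integrable_swap
    ((hf.const_mul _).indicator measurableSet_ball) fun y ↦ ?_
  by_cases hy : y ∈ ball x φ.rOut
  · rw [Set.indicator_of_mem hy]
    have h_le := φ.normed_le_div_measure_closedBall_rIn volume (x - y)
    rw [one_div] at h_le
    exact mul_le_mul_of_nonneg_right h_le (hf_nonneg y)
  · rw [Set.indicator_of_notMem hy]
    have hxy : φ.normed volume (x - y) = 0 := by
      rwa [← Function.notMem_support, φ.support_normed_eq, mem_ball_zero_iff, ← dist_eq_norm,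
        dist_comm]
    simp [hxy]

end MollifiedSupermean

section Green

variable {E : Type*} [NormedAddCommGroup E] [InnerProductSpace ℝ E] [FiniteDimensional ℝ E]
  [MeasurableSpace E] [BorelSpace E] {Ω D : Set E} {w : E → ℝ} {x : E} {ε σ r R : ℝ}

/-- The expected occupation time of `D` as a real-valued function, a discrete Green potential. -/
noncomputable def discreteGreen (Ω : Set E) (ε : ℝ) (D : Set E) (x : E) : ℝ :=
  (occupationTime Ω ε D x).toReal

theorem discreteGreen_nonneg : 0 ≤ discreteGreen Ω ε D x :=
  ENNReal.toReal_nonneg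

theorem abs_discreteGreen_le (hε : 0 < ε) (hΩ : Ω ⊆ ball 0 1) (hD : MeasurableSet D)
    (hDΩ : D ⊆ innerParallelSet Ω ε) (x : E) :
    |discreteGreen Ω ε D x| ≤ (ball (0 : E) 1).indicator 1 x := by
  rw [abs_of_nonneg discreteGreen_nonneg]
  refine (ENNReal.toReal_mono ENNReal.ofReal_ne_top
    (occupationTime_le_one_sub_norm_sq hε hΩ hD hDΩ x)).trans ?_
  rw [ENNReal.toReal_ofReal', max_le_iff]
  by_cases hx : x ∈ ball (0 : E) 1
  · simp [Set.indicator_of_mem hx]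
  · rw [mem_ball_zero_iff, not_lt] at hx
    simp [hx]

theorem integrable_discreteGreen (hε : 0 < ε) (hΩ : Ω ⊆ ball 0 1) (hD : MeasurableSet D)
    (hDΩ : D ⊆ innerParallelSet Ω ε) : Integrable (discreteGreen Ω ε D) :=
  ((integrable_indicator_iff measurableSet_ball).2
    (integrableOn_const measure_ball_lt_top.ne)).mono'
    (measurable_occupationTime Ω ε hD).ennreal_toReal.aestronglyMeasurable
    (.of_forall (abs_discreteGreen_le hε hΩ hD hDΩ))

theorem integral_abs_discreteGreen_le (hε : 0 < ε) (hΩ : Ω ⊆ ball 0 1) (hD : MeasurableSet D)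
    (hDΩ : D ⊆ innerParallelSet Ω ε) :
    ∫ x, |discreteGreen Ω ε D x| ≤ volume.real (ball (0 : E) 1) := by
  rw [← integral_indicator_one measurableSet_ball]
  exact integral_mono (integrable_discreteGreen hε hΩ hD hDΩ).abs
    ((integrable_indicator_iff measurableSet_ball).2 (integrableOn_const measure_ball_lt_top.ne))
    (abs_discreteGreen_le hε hΩ hD hDΩ)

theorem occupationTime_ne_top (hε : 0 < ε) (hΩ : Ω ⊆ ball 0 1) (hD : MeasurableSet D)
    (hDΩ : D ⊆ innerParallelSet Ω ε) (x : E) : occupationTime Ω ε D x ≠ ⊤ :=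
  ne_top_of_le_ne_top ENNReal.ofReal_ne_top (occupationTime_le_one_sub_norm_sq hε hΩ hD hDΩ x)

theorem ofReal_discreteGreen (hε : 0 < ε) (hΩ : Ω ⊆ ball 0 1) (hD : MeasurableSet D)
    (hDΩ : D ⊆ innerParallelSet Ω ε) (x : E) :
    .ofReal (discreteGreen Ω ε D x) = occupationTime Ω ε D x :=
  ENNReal.ofReal_toReal (occupationTime_ne_top hε hΩ hD hDΩ x)

theorem setAverage_discreteGreen_le (hε : 0 < ε) (hΩ : Ω ⊆ ball 0 1) (hD : MeasurableSet D)
    (hDΩ : D ⊆ innerParallelSet Ω ε) (hx : x ∈ innerParallelSet Ω ε) :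
    ⨍ y in ball x ε, discreteGreen Ω ε D y ≤ discreteGreen Ω ε D x := by
  rw [← ENNReal.ofReal_le_ofReal_iff discreteGreen_nonneg, ofReal_setAverage
    (integrable_discreteGreen hε hΩ hD hDΩ).integrableOn (.of_forall fun _ ↦ discreteGreen_nonneg),
    ← setLAverage_eq]
  simp_rw [ofReal_discreteGreen hε hΩ hD hDΩ]
  exact setLAverage_occupationTime_le hε hD hDΩ hx

theorem sq_le_discreteGreen [Nontrivial E] (hε : 0 < ε) (hΩ : Ω ⊆ ball 0 1) (hD : MeasurableSet D)
    (hDΩ : D ⊆ innerParallelSet Ω ε) (hR : 0 ≤ R) (hx : ball x R ⊆ D) :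
    R ^ 2 ≤ discreteGreen Ω ε D x := by
  rw [← ENNReal.ofReal_le_ofReal_iff discreteGreen_nonneg, ofReal_discreteGreen hε hΩ hD hDΩ]
  simpa using ofReal_sq_sub_norm_sub_sq_le_occupationTime hε hΩ hD hDΩ hR hx x

theorem IsPositiveHarmonicOn.setIntegral_discreteGreen_le [Nontrivial E]
    (hw : IsPositiveHarmonicOn w Ω) (hΩ : Ω ⊆ ball 0 1) (hD : MeasurableSet D)
    (hDΩ : D ⊆ innerParallelSet Ω ε) (hwD : ∀ y ∈ D, w y ≤ 1) (hε : 0 < ε) (hεσ : ε ≤ σ)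
    (hx : ball x (3 * σ) ⊆ Ω) : ∫ y in ball x σ, discreteGreen Ω ε D y ≤
      2 ^ Module.finrank ℝ E / w x * volume.real (ball (0 : E) 1) := by
  have hwx : 0 < w x := hw.pos x (hx (mem_ball_self (by linarith)))
  unfold discreteGreen
  rw [integral_toReal (measurable_occupationTime Ω ε hD).aemeasurable
    (.of_forall fun y ↦ (occupationTime_ne_top hε hΩ hD hDΩ y).lt_top)]
  refine ENNReal.toReal_le_of_le_ofReal (by positivity) ?_
  rw [ENNReal.ofReal_mul (by positivity), ofReal_measureReal measure_ball_lt_top.ne]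
  exact hw.setLIntegral_occupationTime_le hΩ hD hDΩ hwD hε hεσ hx

theorem IsPositiveHarmonicOn.normed_convolution_discreteGreen_le [Nontrivial E]
    (hw : IsPositiveHarmonicOn w Ω) (hΩ : Ω ⊆ ball 0 1) (hD : MeasurableSet D)
    (hDΩ : D ⊆ innerParallelSet Ω ε) (hwD : ∀ y ∈ D, w y ≤ 1) (hε : 0 < ε)
    (φ : ContDiffBump (0 : E)) (hεφ : ε ≤ φ.rOut) (hx : ball x (3 * φ.rOut) ⊆ Ω) :
    (φ.normed volume ⋆[lsmul ℝ ℝ] discreteGreen Ω ε D) x ≤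
      (2 / φ.rIn) ^ Module.finrank ℝ E / w x := by
  have hwx : 0 < w x := hw.pos x (hx (mem_ball_self (by linarith)))
  have h_unit := real_volume_ball_pos (0 : E) one_pos
  have h_rIn := φ.rIn_pos
  refine (normed_convolution_le φ (integrable_discreteGreen hε hΩ hD hDΩ)
    (fun _ ↦ discreteGreen_nonneg) x).trans ?_
  rw [measureReal_def, Measure.addHaar_closedBall_eq_addHaar_ball, ← measureReal_def,
    real_volume_ball _ h_rIn, div_le_iff₀ (by positivity)]
  refine (hw.setIntegral_discreteGreen_le hΩ hD hDΩ hwD hε hεφ hx).trans_eq ?_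
  rw [div_pow]
  field_simp

theorem exists_laplacian_normed_convolution_discreteGreen_le [Nontrivial E]
    (φ : ContDiffBump (0 : E)) {c : ℝ} (hc : 0 < c) :
    ∃ τ > 0, ∀ ε, 0 < ε → ε ≤ τ → ∀ Ω D : Set E, Ω ⊆ ball 0 1 → MeasurableSet D →
      D ⊆ innerParallelSet Ω ε → ∀ x, ball x (2 * φ.rOut) ⊆ Ω →
      Δ (φ.normed volume ⋆[lsmul ℝ ℝ] discreteGreen Ω ε D) x ≤ c := by
  obtain ⟨τ, hτ, h_osc⟩ := exists_forall_abs_laplacian_convolution_sub_le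
    (φ.contDiff_normed (μ := volume)) φ.hasCompactSupport_normed
    (real_volume_ball_pos (0 : E) one_pos) hc
  refine ⟨min τ φ.rOut, lt_min hτ φ.rOut_pos, fun ε hε hετ Ω D hΩ hD hDΩ x hx ↦ ?_⟩
  have h_int := integrable_discreteGreen hε hΩ hD hDΩ
  refine laplacian_le_of_setAverage_ball_le (φ.hasCompactSupport_normed.contDiff_convolution_left _
    φ.contDiff_normed h_int.locallyIntegrable) hε (fun y hy ↦ ?_) ?_
  · rw [mem_ball, dist_comm] at hy
    exact (le_abs_self _).trans (h_osc _ h_int (integral_abs_discreteGreen_le hε hΩ hD hDΩ) x y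
      (hy.trans_le (hετ.trans (min_le_left _ _))))
  · refine setAverage_ball_convolution_le φ.continuous_normed φ.hasCompactSupport_normed
      φ.nonneg_normed h_int.locallyIntegrable fun t ht ↦ ?_
    rw [φ.support_normed_eq, mem_ball_zero_iff] at ht
    refine setAverage_discreteGreen_le hε hΩ hD hDΩ ((ball_subset_ball' ?_).trans hx)
    rw [dist_eq_norm, sub_sub_cancel_left, norm_neg]
    linarith [hετ.trans (min_le_right _ _)]

theorem setAverage_add_mul_one_sub_norm_sq_le {p : E → ℝ} (hp : ContDiff ℝ 2 p) (hr : 0 < r) {K : ℝ}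
    (hΔ : ∀ y ∈ ball x r, Δ p y ≤ 2 * Module.finrank ℝ E * K) :
    ⨍ y in ball x r, (p y + K * (1 - ‖y‖ ^ 2)) ≤ p x + K * (1 - ‖x‖ ^ 2) := by
  have h_mean := add_setAverage_ball_le_of_laplacian_le (c := -K) hp hr fun y hy ↦ by
    rw [mul_neg, neg_neg]
    exact hΔ y hy
  have h_sq := setAverage_ball_const_sub_norm_sub_sq 1 x 0 hr
  simp only [sub_zero] at h_sq
  rw [setAverage_add (integrableOn_ball_of_continuous hp.continuous _ _)
    (integrableOn_ball_of_continuous (by fun_prop) _ _), setAverage_const_mul, h_sq]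
  linarith

/-- Mollifying the discrete Green potential of a walk with steps much shorter than the mollification
scale makes it almost superharmonic; adding a multiple of `1 - ‖y‖ ^ 2` removes the defect. -/
theorem IsPositiveHarmonicOn.exists_green [Nontrivial E] (hw : IsPositiveHarmonicOn w Ω)
    (hΩ : Ω ⊆ ball 0 1) (hD : MeasurableSet D) (hr : 0 < r) (hDΩ : D ⊆ innerParallelSet Ω r)
    (hwD : ∀ y ∈ D, w y ≤ 1) (hσ : 0 < σ) (hx : ball x (3 * σ) ⊆ Ω) :
    ∃ q : E → ℝ, Continuous q ∧ (∀ y ∈ ball 0 1, 0 < q y) ∧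
      (∀ y s, 0 < s → ball y (s + 2 * σ) ⊆ Ω → ⨍ z in ball y s, q z ≤ q y) ∧
      (∀ y R, 0 ≤ R → ball y (R + σ) ⊆ D → R ^ 2 ≤ q y) ∧
      q x ≤ 2 * ((4 / σ) ^ Module.finrank ℝ E / w x) := by
  have hwx : 0 < w x := hw.pos x (hx (mem_ball_self (by positivity)))
  have h_dim : (0 : ℝ) < Module.finrank ℝ E := by exact_mod_cast Module.finrank_pos
  let φ : ContDiffBump (0 : E) := ⟨σ / 2, σ, by positivity, by linarith⟩
  set K := (4 / σ) ^ Module.finrank ℝ E / w x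
  have hK_pos : 0 < K := by positivity
  obtain ⟨τ, hτ, h_lap⟩ := exists_laplacian_normed_convolution_discreteGreen_le φ
    (c := 2 * Module.finrank ℝ E * K) (by positivity)
  obtain ⟨ε, hε, hεr, hεσ, hετ⟩ : ∃ ε > 0, ε ≤ r ∧ ε ≤ σ ∧ ε ≤ τ :=
    ⟨min r (min σ τ), by positivity, by simp, by simp, by simp⟩
  replace hDΩ : D ⊆ innerParallelSet Ω ε := hDΩ.trans (innerParallelSet_anti Ω hεr)
  have h_int := integrable_discreteGreen hε hΩ hD hDΩ
  set p := φ.normed volume ⋆[lsmul ℝ ℝ] discreteGreen Ω ε D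
  have hp : ContDiff ℝ 2 p := φ.hasCompactSupport_normed.contDiff_convolution_left _
    φ.contDiff_normed h_int.locallyIntegrable
  have h_corr {y : E} (hy : y ∈ ball (0 : E) 1) : 0 < K * (1 - ‖y‖ ^ 2) :=
    mul_pos hK_pos (sub_pos.2 (pow_lt_one₀ (norm_nonneg y) (mem_ball_zero_iff.1 hy) two_ne_zero))
  have h_p_nonneg (y : E) : 0 ≤ p y :=
    le_normed_convolution φ h_int.locallyIntegrable fun _ _ ↦ discreteGreen_nonneg
  refine ⟨fun y ↦ p y + K * (1 - ‖y‖ ^ 2), hp.continuous.add (by fun_prop),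
    fun y hy ↦ add_pos_of_nonneg_of_pos (h_p_nonneg y) (h_corr hy), fun y s hs hy ↦ ?_,
    fun y R hR hy ↦ ?_, ?_⟩
  · exact setAverage_add_mul_one_sub_norm_sq_le hp hs fun z hz ↦ h_lap ε hε hετ Ω D hΩ hD hDΩ z
      ((ball_subset_ball' (by linarith [mem_ball.1 hz])).trans hy)
  · refine le_add_of_le_of_nonneg (le_normed_convolution φ h_int.locallyIntegrable fun z hz ↦
      sq_le_discreteGreen hε hΩ hD hDΩ hR ((ball_subset_ball' ?_).trans hy)) (h_corr ?_).le
    · linarith [mem_ball.1 hz]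
    · exact hΩ (innerParallelSet_subset Ω hε (hDΩ (hy (mem_ball_self (by linarith)))))
  · have h_bound := hw.normed_convolution_discreteGreen_le hΩ hD hDΩ hwD hε φ hεσ hx
    have h_quot : 2 / (σ / 2) = 4 / σ := by field_simp; norm_num
    rw [h_quot] at h_bound
    linarith [mul_nonneg hK_pos.le (sq_nonneg ‖x‖)]

end Green

section RadialBarrier

variable {E : Type*} [NormedAddCommGroup E]

/-- A radial barrier: it vanishes on `closedBall 0 t`, and for large `α` it is strictly
superharmonic where it is positive, as long as `‖y‖` stays away from `0`. The normalisation makes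
it `1`-Lipschitz on the unit ball. -/
noncomputable def radialBarrier (α t : ℝ) (y : E) : ℝ :=
  max (Real.exp (-(α * t ^ 2)) - Real.exp (-(α * ‖y‖ ^ 2))) 0 / (2 * α)

variable {α t : ℝ} {x y : E}

theorem continuous_radialBarrier : Continuous (radialBarrier α t : E → ℝ) := by
  unfold radialBarrier
  fun_prop

theorem radialBarrier_nonneg (hα : 0 ≤ α) : 0 ≤ radialBarrier α t y :=
  div_nonneg (le_max_right _ _) (by positivity)

theorem radialBarrier_eq_zero (hα : 0 ≤ α) (hy : ‖y‖ ≤ t) : radialBarrier α t y = 0 := by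
  have h : Real.exp (-(α * t ^ 2)) ≤ Real.exp (-(α * ‖y‖ ^ 2)) := by gcongr
  rw [radialBarrier, max_eq_right (sub_nonpos.2 h), zero_div]

theorem radialBarrier_of_le_norm (hα : 0 ≤ α) (ht : 0 ≤ t) (hy : t ≤ ‖y‖) : radialBarrier α t y =
    (Real.exp (-(α * t ^ 2)) - Real.exp (-(α * ‖y‖ ^ 2))) / (2 * α) := by
  have h : Real.exp (-(α * ‖y‖ ^ 2)) ≤ Real.exp (-(α * t ^ 2)) := by gcongr
  rw [radialBarrier, max_eq_left (sub_nonneg.2 h)]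

theorem exp_neg_sub_exp_neg_le {s t : ℝ} (hs : 0 ≤ s) :
    Real.exp (-s) - Real.exp (-t) ≤ |t - s| := by
  have h_exp : Real.exp (-s) * (1 + (s - t)) ≤ Real.exp (-t) := by
    rw [show -t = -s + (s - t) by ring, Real.exp_add, add_comm 1]
    exact mul_le_mul_of_nonneg_left (Real.add_one_le_exp _) (Real.exp_nonneg _)
  have h_le_one : Real.exp (-s) ≤ 1 := Real.exp_le_one_iff.2 (neg_nonpos.2 hs)
  calc _ ≤ Real.exp (-s) * (t - s) := by linarith
    _ ≤ Real.exp (-s) * |t - s| := by gcongr; exact le_abs_self _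
    _ ≤ |t - s| := mul_le_of_le_one_left (abs_nonneg _) h_le_one

theorem radialBarrier_sub_le (hα : 0 < α) (hx : ‖x‖ ≤ 1) (hy : ‖y‖ ≤ 1) :
    radialBarrier α t y - radialBarrier α t x ≤ dist x y := by
  have h_sq : |α * ‖y‖ ^ 2 - α * ‖x‖ ^ 2| ≤ 2 * α * dist x y := by
    rw [show α * ‖y‖ ^ 2 - α * ‖x‖ ^ 2 = α * ((‖y‖ + ‖x‖) * (‖y‖ - ‖x‖)) by ring, abs_mul, abs_mul,
      abs_of_pos hα, mul_comm 2, mul_assoc, dist_comm, dist_eq_norm]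
    gcongr
    · rw [abs_of_nonneg (by positivity)]
      linarith
    · exact abs_norm_sub_norm_le y x
  have h_exp := (exp_neg_sub_exp_neg_le (by positivity : 0 ≤ α * ‖x‖ ^ 2)).trans h_sq
  rw [radialBarrier, radialBarrier, ← sub_div, div_le_iff₀' (by positivity)]
  refine (max_sub_max_le_max _ _ _ _).trans (max_le ?_ ?_)
  · linarith
  · rw [sub_zero]
    positivity

theorem radialBarrier_ge {T R : ℝ} (hα : 0 < α) (ht : 0 ≤ t) (htT : t ≤ T) (hR : 0 ≤ R)
    (hy : R ≤ ‖y‖) :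
    (Real.exp (-(α * T ^ 2)) - Real.exp (-(α * R ^ 2))) / (2 * α) ≤ radialBarrier α t y := by
  refine div_le_div_of_nonneg_right (le_max_of_le_left ?_) (by positivity)
  gcongr

variable [InnerProductSpace ℝ E]

theorem contDiff_exp_neg_norm_sq (α : ℝ) :
    ContDiff ℝ 2 fun y : E ↦ Real.exp (-(α * ‖y‖ ^ 2)) :=
  (contDiff_const.mul (contDiff_norm_sq ℝ)).neg.exp

variable [FiniteDimensional ℝ E]

theorem laplacian_exp_neg_norm_sq (α : ℝ) (x : E) :
    Δ (fun y : E ↦ Real.exp (-(α * ‖y‖ ^ 2))) x =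
      2 * α * (2 * α * ‖x‖ ^ 2 - Module.finrank ℝ E) * Real.exp (-(α * ‖x‖ ^ 2)) := by
  have h_deriv (c s : ℝ) : HasDerivAt (fun s ↦ c * Real.exp (-(α * s)))
      (-(α * c) * Real.exp (-(α * s))) s := by
    refine (((hasDerivAt_mul_const α).neg.exp.const_mul c).congr_deriv ?_).congr_of_eventuallyEq
      (.of_forall fun s ↦ ?_)
    all_goals simp only [Pi.neg_apply]; ring_nf
  have h_deriv_fun := funext fun s ↦ (h_deriv 1 s).deriv
  have h := laplacian_comp_norm_sq (g := fun s ↦ 1 * Real.exp (-(α * s))) (by fun_prop) x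
  rw [h_deriv_fun, (h_deriv _ _).deriv] at h
  simp only [one_mul] at h
  rw [h]
  ring

variable [MeasurableSpace E] [BorelSpace E]

theorem eventually_lt_setAverage_ball_of_laplacian_pos [Nontrivial E] {u : E → ℝ}
    (hu : ContDiff ℝ 2 u) (h : 0 < Δ u x) : ∀ᶠ r in 𝓝[>] 0, u x < ⨍ y in ball x r, u y := by
  have h_dim : (0 : ℝ) < Module.finrank ℝ E := by exact_mod_cast Module.finrank_pos
  obtain ⟨δ, hδ, h_ball⟩ := Metric.eventually_nhds_iff_ball.1
    ((continuous_laplacian hu).continuousAt.eventually_const_le (half_lt_self h))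
  filter_upwards [Ioo_mem_nhdsGT hδ] with r hr
  have h_mean := add_le_setAverage_ball_of_le_laplacian
    (c := Δ u x / 2 / (2 * Module.finrank ℝ E)) hu hr.1 fun y hy ↦ by
      rw [mul_div_cancel₀ _ (by positivity)]
      exact h_ball y (ball_subset_ball hr.2.le hy)
  refine lt_of_lt_of_le (lt_add_of_pos_right _ ?_) h_mean
  exact mul_pos (mul_pos (by positivity) (pow_pos hr.1 2)) ballMeanSq_pos

theorem eventually_setAverage_radialBarrier_lt [Nontrivial E] (hα : 0 < α) (ht : 0 ≤ t)
    (hx : t < ‖x‖) (hαx : Module.finrank ℝ E < 2 * α * ‖x‖ ^ 2) :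
    ∀ᶠ r in 𝓝[>] 0, ⨍ y in ball x r, radialBarrier α t y < radialBarrier α t x := by
  have h_laplacian : 0 < Δ (fun y : E ↦ Real.exp (-(α * ‖y‖ ^ 2))) x := by
    rw [laplacian_exp_neg_norm_sq]
    exact mul_pos (mul_pos (by positivity) (sub_pos.2 hαx)) (Real.exp_pos _)
  have h_exp := contDiff_exp_neg_norm_sq (E := E) α
  filter_upwards [eventually_lt_setAverage_ball_of_laplacian_pos h_exp h_laplacian,
    Ioo_mem_nhdsGT (sub_pos.2 hx)] with r h_lt hr
  have h_outside : ∀ y ∈ ball x r, radialBarrier α t y =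
      (2 * α)⁻¹ * (Real.exp (-(α * t ^ 2)) + -1 * Real.exp (-(α * ‖y‖ ^ 2))) := fun y hy ↦ by
    have h_norm := norm_sub_norm_le x y
    rw [← dist_eq_norm, dist_comm] at h_norm
    rw [radialBarrier_of_le_norm hα.le ht (by linarith [mem_ball.1 hy, hr.2])]
    ring
  have h_const : ⨍ _ in ball x r, Real.exp (-(α * t ^ 2)) ∂volume = Real.exp (-(α * t ^ 2)) :=
    setAverage_const (measure_ball_pos _ _ hr.1).ne' measure_ball_lt_top.ne _
  rw [setAverage_congr_fun measurableSet_ball (.of_forall h_outside), setAverage_const_mul,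
    setAverage_add (integrableOn_ball_of_continuous continuous_const _ _)
      (integrableOn_ball_of_continuous (by fun_prop) _ _), setAverage_const_mul, h_const,
    h_outside x (mem_ball_self hr.1)]
  exact mul_lt_mul_of_pos_left (by linarith) (by positivity)

end RadialBarrier

section StateFunction

theorem exists_ball_subset_ball_inter_ball {E : Type*} [NormedAddCommGroup E] [NormedSpace ℝ E]
    {K : Set E} {x : E} {c : ℝ} (hx : 0 < infDist x K) (hc : 0 < c) (hc' : 2 * c ≤ 1) :
    ∃ z ∈ K, ∃ p, ball p (c * infDist x K) ⊆
      ball x ((1 - c) * infDist x K) ∩ ball z (4 * c * infDist x K) := by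
  have hK : K.Nonempty := Set.nonempty_iff_ne_empty.2 fun h ↦ by simp [h] at hx
  set r := infDist x K
  obtain ⟨z, hzK, hz⟩ := (infDist_lt_iff hK).1 (lt_add_of_pos_right r (mul_pos hc hx))
  have h_le : r ≤ dist x z := infDist_le_dist_of_mem hzK
  have h_dist : 0 < dist x z := hx.trans_le h_le
  set a := (1 - 2 * c) * r / dist x z
  have ha_mul : a * dist x z = (1 - 2 * c) * r := div_mul_cancel₀ _ h_dist.ne'
  have ha_nonneg : 0 ≤ a := div_nonneg (mul_nonneg (by linarith) hx.le) h_dist.le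
  have ha_le_one : a ≤ 1 := (div_le_one h_dist).2 (by nlinarith)
  refine ⟨z, hzK, AffineMap.lineMap x z a, Set.subset_inter (ball_subset_ball' ?_)
    (ball_subset_ball' ?_)⟩
  · rw [dist_lineMap_left, Real.norm_of_nonneg ha_nonneg, ha_mul]
    linarith
  · rw [dist_lineMap_right, Real.norm_of_nonneg (sub_nonneg.2 ha_le_one), sub_mul, ha_mul]
    linarith

variable {E : Type*} [NormedAddCommGroup E] [InnerProductSpace ℝ E] [FiniteDimensional ℝ E]
  [MeasurableSpace E] [BorelSpace E]

/-- `φ` is a nondegenerate subharmonic state function of a set `Ω ⊆ B₁` that omits the origin, with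
Lipschitz constant `L` and nondegeneracy constant `κ`. -/
structure IsStateFunction (φ : E → ℝ) (Ω : Set E) (L κ : ℝ) : Prop where
  subset_ball : Ω ⊆ ball 0 1
  zero_notMem : 0 ∉ Ω
  continuous : Continuous φ
  pos : ∀ x ∈ Ω, 0 < φ x
  eq_zero : ∀ x ∈ ball 0 1 \ Ω, φ x = 0
  abs_sub_le : ∀ x ∈ ball 0 1, ∀ y ∈ ball 0 1, |φ x - φ y| ≤ L * dist x y
  mul_infDist_le : ∀ x ∈ ball 0 (1 / 2), κ * infDist x (ball 0 1 \ Ω) ≤ φ x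
  subharmonic : IsDistribSubharmonicOn φ (ball 0 1)

namespace IsStateFunction

variable {φ : E → ℝ} {Ω : Set E} {L κ : ℝ} {x y : E} {r c : ℝ}

theorem sub_le (h : IsStateFunction φ Ω L κ) (hx : ‖x‖ < 1) (hy : ‖y‖ < 1) :
    φ x - φ y ≤ L * dist x y :=
  (le_abs_self _).trans
    (h.abs_sub_le x (mem_ball_zero_iff.2 hx) y (mem_ball_zero_iff.2 hy))

theorem le_mul_dist (h : IsStateFunction φ Ω L κ) (hx : ‖x‖ < 1) (hy : y ∈ ball 0 1 \ Ω) :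
    φ x ≤ L * dist x y := by
  simpa [h.eq_zero y hy] using h.sub_le hx (mem_ball_zero_iff.1 hy.1)

theorem zero_mem_diff (h : IsStateFunction φ Ω L κ) : (0 : E) ∈ ball 0 1 \ Ω :=
  ⟨mem_ball_self one_pos, h.zero_notMem⟩

theorem le_mul_norm (h : IsStateFunction φ Ω L κ) (hx : ‖x‖ < 1) : φ x ≤ L * ‖x‖ := by
  simpa using h.le_mul_dist hx h.zero_mem_diff

theorem mem_of_mul_dist_lt (h : IsStateFunction φ Ω L κ) (hx : ‖x‖ < 1) (hy : ‖y‖ < 1)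
    (hxy : L * dist x y < φ x) : y ∈ Ω :=
  by_contra fun hyΩ ↦ (h.le_mul_dist hx ⟨mem_ball_zero_iff.2 hy, hyΩ⟩).not_gt hxy

theorem ball_subset (h : IsStateFunction φ Ω L κ) (hL : 0 < L) (hr : 0 ≤ r) (hx : ‖x‖ + r < 1)
    (hφ : L * r ≤ φ x) : ball x r ⊆ Ω := fun y hy ↦ by
  have h_dist : L * dist x y < L * r := by
    rw [dist_comm]
    exact mul_lt_mul_of_pos_left hy hL
  have h_norm := norm_le_norm_add_norm_sub' y x
  rw [← dist_eq_norm] at h_norm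
  exact h.mem_of_mul_dist_lt (by linarith) (by linarith [mem_ball.1 hy]) (h_dist.trans_le hφ)

theorem le_setAverage_ball (h : IsStateFunction φ Ω L κ) (hr : 0 < r) (hx : ‖x‖ + r < 1) :
    φ x ≤ ⨍ y in ball x r, φ y :=
  h.subharmonic.le_setAverage_ball h.continuous isOpen_ball hr
    (closedBall_subset_ball' (by rwa [dist_zero_right, add_comm]))

/-- Nondegeneracy makes the distance `r` from `x` to the zero set of `φ` comparable to `φ x`, so the
Lipschitz bound makes `φ` small near a zero `z` at almost minimal distance. The ball of radius
slightly less than `r` stays in `Ω` and still reaches into that neighbourhood of `z`. -/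
theorem exists_ball_le_quarter (h : IsStateFunction φ Ω L κ) (hL : 0 < L) (hκ : 0 ≤ κ) (hc : 0 < c)
    (hc' : 2 * c ≤ 1) (hcL : 16 * c * L ≤ κ) (hx : ‖x‖ < 1 / 2) (hφx : 0 < φ x) :
    ∃ s, 0 < s ∧ κ * s ≤ φ x ∧ ball x (s + c * φ x / L) ⊆ Ω ∧
      ∃ p, ball p (c * s) ⊆ ball x s ∧ ∀ y ∈ ball p (c * s), φ y ≤ φ x / 4 := by
  set r := infDist x (ball 0 1 \ Ω)
  have h_zero : r ≤ ‖x‖ := by simpa using infDist_le_dist_of_mem (x := x) h.zero_mem_diff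
  have h_lower : φ x / L ≤ r := (le_infDist ⟨0, h.zero_mem_diff⟩).2 fun z hz ↦
    (div_le_iff₀' hL).2 (h.le_mul_dist (by linarith) hz)
  have h_upper : κ * r ≤ φ x := h.mul_infDist_le x (mem_ball_zero_iff.2 hx)
  have hr_pos : 0 < r := (div_pos hφx hL).trans_le h_lower
  have h_ball : ball x r ⊆ Ω := fun y hy ↦ by
    have h_norm := norm_le_norm_add_norm_sub' y x
    rw [← dist_eq_norm] at h_norm
    by_contra hyΩ
    have h_far := infDist_le_dist_of_mem (x := x) (s := ball 0 1 \ Ω) (y := y)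
      ⟨mem_ball_zero_iff.2 (by linarith [mem_ball.1 hy]), hyΩ⟩
    exact (mem_ball'.1 hy).not_ge h_far
  obtain ⟨z, hz, p, hp⟩ := exists_ball_subset_ball_inter_ball hr_pos hc hc'
  have h_shrink : (1 - c) * r ≤ r := mul_le_of_le_one_left hr_pos.le (by linarith)
  have h_hole : ball p (c * ((1 - c) * r)) ⊆ ball x ((1 - c) * r) ∩ ball z (4 * c * r) :=
    (ball_subset_ball (mul_le_mul_of_nonneg_left h_shrink hc.le)).trans hp
  refine ⟨(1 - c) * r, mul_pos (by linarith) hr_pos, ?_, (ball_subset_ball ?_).trans h_ball, p,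
    h_hole.trans Set.inter_subset_left, fun y hy ↦ ?_⟩
  · exact (mul_le_mul_of_nonneg_left h_shrink hκ).trans h_upper
  · rw [mul_div_assoc]
    linarith [mul_le_mul_of_nonneg_left h_lower hc.le]
  · have hyΩ : y ∈ Ω := h_ball (ball_subset_ball h_shrink (h_hole hy).1)
    calc φ y ≤ L * dist y z := h.le_mul_dist (mem_ball_zero_iff.1 (h.subset_ball hyΩ)) hz
      _ ≤ L * (4 * c * r) := by gcongr; exact (h_hole hy).2.le
      _ = 16 * c * L * r / 4 := by ring
      _ ≤ κ * r / 4 := by gcongr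
      _ ≤ φ x / 4 := by gcongr

end IsStateFunction

end StateFunction

section Comparison

theorem inv_two_mul_sqrt_mul_self {a : ℝ} (ha : 0 < a) : (2 * √a)⁻¹ * a = √a / 2 := by
  nth_rw 2 [← Real.sq_sqrt ha.le]
  field_simp

theorem isMaxOn_sub_sqrt_linearization {α : Type*} {u g : α → ℝ} {s : Set α} {x : α}
    (hg : ∀ y ∈ s, 0 ≤ g y) (hx : 0 < g x) (h : IsMaxOn (fun y ↦ u y - √(g y)) s x) :
    IsMaxOn (fun y ↦ u y - (2 * √(g x))⁻¹ * g y) s x := by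
  have h_sqrt : 0 < √(g x) := Real.sqrt_pos.2 hx
  refine isMaxOn_iff.2 fun y hy ↦ ?_
  have h_am_gm : √(g y) ≤ √(g x) / 2 + (2 * √(g x))⁻¹ * g y := by
    rw [← sub_nonneg]
    have h_square : √(g x) / 2 + (2 * √(g x))⁻¹ * g y - √(g y) =
        (√(g x) - √(g y)) ^ 2 / (2 * √(g x)) := by
      field_simp
      linear_combination -Real.sq_sqrt (hg y hy)
    rw [h_square]
    positivity
  linarith [isMaxOn_iff.1 h y hy, inv_two_mul_sqrt_mul_self hx]

variable {E : Type*} [NormedAddCommGroup E] [InnerProductSpace ℝ E] [FiniteDimensional ℝ E]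
  [MeasurableSpace E] [BorelSpace E]

theorem not_isLocalMax_of_eventually_lt_setAverage {u : E → ℝ} {x : E} (hu : Continuous u)
    (h : ∀ᶠ r in 𝓝[>] 0, u x < ⨍ y in ball x r, u y) : ¬ IsLocalMax u x := fun h_max ↦ by
  obtain ⟨δ, hδ, h_le⟩ := Metric.eventually_nhds_iff_ball.1 h_max
  obtain ⟨r, h_lt, hr⟩ := (h.and (Ioo_mem_nhdsGT hδ)).exists
  have h_avg := setAverage_mono_on (μ := volume) (integrableOn_ball_of_continuous hu x r)
    (integrableOn_ball_of_continuous (continuous_const (y := u x)) x r) measurableSet_ball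
    fun y hy ↦ h_le y (ball_subset_ball hr.2.le hy)
  rw [setAverage_const (measure_ball_pos _ _ hr.1).ne' measure_ball_lt_top.ne] at h_avg
  exact h_lt.not_ge h_avg

theorem setAverage_ball_indicator_ball {x p : E} {s c : ℝ} (hs : 0 < s) (hc : 0 < c)
    (h : ball p (c * s) ⊆ ball x s) (a : ℝ) :
    ⨍ y in ball x s, (ball p (c * s)).indicator (fun _ ↦ a) y = c ^ Module.finrank ℝ E * a := by
  have h_unit := real_volume_ball_pos (0 : E) one_pos
  rw [setAverage_eq, setIntegral_indicator measurableSet_ball, Set.inter_eq_right.2 h,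
    setIntegral_const, real_volume_ball x hs, real_volume_ball p (mul_pos hc hs), smul_eq_mul,
    smul_eq_mul, mul_pow]
  field_simp

namespace IsStateFunction

variable {φ β g : E → ℝ} {Ω : Set E} {L κ c Λ μ ε α t : ℝ} {x : E}

/-- At an interior maximum the mean value inequalities for `φ` and `g` nearly balance, and the hole
in which `φ` is small makes up a fixed proportion `c ^ d` of the ball: too much for `β`, whose
oscillation is at most `Λ s`. -/
theorem not_isMaxOn_sub_of_norm_lt_half (h : IsStateFunction φ Ω L κ) (hL : 0 < L) (hκ : 0 < κ)
    (hc : 0 < c) (hc' : 2 * c ≤ 1) (hcL : 16 * c * L ≤ κ)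
    (hΛ : 0 ≤ Λ) (hΛc : 4 * Λ < c ^ Module.finrank ℝ E * κ)
    (hβx : ∀ y ∈ ball (0 : E) 1, β x - β y ≤ Λ * dist y x)
    (hg : Continuous g) (hg_nonneg : ∀ y ∈ ball (0 : E) 1, 0 ≤ g y)
    (hg_mean : ∀ s, 0 < s → ball x (s + c * φ x / L) ⊆ Ω → ⨍ y in ball x s, g y ≤ g x)
    (hx : ‖x‖ < 1 / 2) (hφx : 0 < φ x) (hφκ : φ x < κ / 4) (hgφ : g x ≤ φ x / 2) :
    ¬ IsMaxOn (fun y ↦ φ y + β y - g y) (closedBall 0 (3 / 4)) x := fun h_max ↦ by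
  obtain ⟨s, hs, hsφ, h_room, p, hp, h_small⟩ :=
    h.exists_ball_le_quarter hL hκ.le hc hc' hcL hx hφx
  have hs_lt : s < 1 / 4 := by nlinarith
  set hole := (ball p (c * s)).indicator fun _ ↦ φ x / 4 with hole_def
  have h_pointwise : ∀ y ∈ ball x s, φ y + hole y ≤ g y + (φ x - g x + Λ * s) := fun y hy ↦ by
    have h_norm := norm_le_norm_add_norm_sub' y x
    rw [← dist_eq_norm] at h_norm
    have hy_norm : ‖y‖ ≤ 3 / 4 := by linarith [mem_ball.1 hy]
    have hy_ball : y ∈ ball (0 : E) 1 := mem_ball_zero_iff.2 (by linarith)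
    have h_le := isMaxOn_iff.1 h_max y (mem_closedBall_zero_iff.2 hy_norm)
    have h_osc : Λ * dist y x ≤ Λ * s := by gcongr; exact (mem_ball.1 hy).le
    have h_Λs : 0 ≤ Λ * s := by positivity
    by_cases hyp : y ∈ ball p (c * s)
    · rw [hole_def, Set.indicator_of_mem hyp]
      linarith [h_small y hyp, hg_nonneg y hy_ball]
    · rw [hole_def, Set.indicator_of_notMem hyp]
      linarith [hβx y hy_ball]
  have h_int {f : E → ℝ} (hf : Continuous f) := integrableOn_ball_of_continuous hf x s
  have h_hole_int : IntegrableOn hole (ball x s) :=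
    (h_int continuous_const).indicator measurableSet_ball
  have h_const : ⨍ _ in ball x s, (φ x - g x + Λ * s) ∂volume = φ x - g x + Λ * s :=
    setAverage_const (measure_ball_pos _ _ hs).ne' measure_ball_lt_top.ne _
  have h_avg := setAverage_mono_on (μ := volume) ((h_int h.continuous).add h_hole_int)
    ((h_int hg).add (h_int continuous_const)) measurableSet_ball h_pointwise
  simp only [Pi.add_apply] at h_avg
  rw [setAverage_add (h_int h.continuous) h_hole_int,
    setAverage_add (h_int hg) (h_int continuous_const), h_const, hole_def,
    setAverage_ball_indicator_ball hs hc hp] at h_avg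
  have h_osc : c ^ Module.finrank ℝ E * (φ x / 4) ≤ Λ * s := by
    linarith [h.le_setAverage_ball hs (by linarith : ‖x‖ + s < 1), hg_mean s hs h_room]
  nlinarith [mul_le_mul_of_nonneg_left hsφ hΛ, mul_lt_mul_of_pos_right hΛc hφx]

theorem not_isLocalMax_sub (h : IsStateFunction φ Ω L κ) (hL : 0 < L)
    (hβ : Continuous β) (hβx : ∀ᶠ r in 𝓝[>] 0, β x < ⨍ y in ball x r, β y)
    (hg : Continuous g) (hg_mean : ∀ s, 0 < s → ball x (s + ε) ⊆ Ω → ⨍ y in ball x s, g y ≤ g x)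
    (hε : 0 < ε) (hx : ‖x‖ + ε < 1) (hφx : L * ε < φ x) :
    ¬ IsLocalMax (fun y ↦ φ y + β y - g y) x := by
  have h_room : 0 < φ x / L - ε := sub_pos.2 ((lt_div_iff₀' hL).2 hφx)
  refine not_isLocalMax_of_eventually_lt_setAverage ((h.continuous.add hβ).sub hg) ?_
  filter_upwards [hβx, Ioo_mem_nhdsGT h_room,
    Ioo_mem_nhdsGT (by linarith : 0 < 1 - ‖x‖ - ε)] with r h_lt hr hr'
  have h_ball : ball x (r + ε) ⊆ Ω := h.ball_subset hL (by linarith [hr.1]) (by linarith [hr'.2])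
    ((le_div_iff₀' hL).1 (by linarith [hr.2]))
  have h_int {f : E → ℝ} (hf : Continuous f) := integrableOn_ball_of_continuous hf x r
  have h_split : ⨍ y in ball x r, (φ y + β y - g y) =
      (⨍ y in ball x r, φ y) + (⨍ y in ball x r, β y) - ⨍ y in ball x r, g y := by
    simp_rw [setAverage_eq]
    rw [integral_sub (h_int (f := fun y ↦ φ y + β y) (h.continuous.add hβ)) (h_int hg),
      integral_add (h_int h.continuous) (h_int hβ), smul_sub, smul_add]
  linarith [h.le_setAverage_ball hr.1 (by linarith [hr'.2]), hg_mean r hr.1 h_ball]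

theorem not_isMaxOn_sub_radialBarrier [Nontrivial E] (h : IsStateFunction φ Ω L κ) (hL : 0 < L)
    (hκ : 0 < κ) (hc : 0 < c) (hc' : 16 * c ≤ 1) (hcL : 16 * c * L ≤ κ)
    (hΛ : 0 < Λ) (hΛc : 4 * Λ < c ^ Module.finrank ℝ E * κ)
    (hα : 2 * Module.finrank ℝ E < α) (ht : 0 ≤ t) (ht' : t < 1 / 2)
    (hg : Continuous g) (hg_nonneg : ∀ y ∈ ball (0 : E) 1, 0 ≤ g y)
    (hg_mean : ∀ s, 0 < s → ball x (s + ε) ⊆ Ω → ⨍ y in ball x s, g y ≤ g x)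
    (hε : 0 < ε) (hx : ‖x‖ < 3 / 4) (hεφ : L * ε ≤ c * φ x) (hφx : 0 < φ x) (hφκ : φ x < κ / 4)
    (hgφ : g x ≤ φ x / 2) :
    ¬ IsMaxOn (fun y ↦ φ y + -Λ * radialBarrier α t y - g y) (closedBall 0 (3 / 4)) x := by
  have hα_pos : 0 < α := lt_of_le_of_lt (by positivity) hα
  rcases lt_or_ge ‖x‖ (1 / 2) with hx_half | hx_half
  · have hε_le : ε ≤ c * φ x / L := (le_div_iff₀' hL).2 hεφ
    refine h.not_isMaxOn_sub_of_norm_lt_half hL hκ hc (by linarith) hcL hΛ.le hΛc (fun y hy ↦ ?_)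
      hg hg_nonneg (fun s hs hxs ↦ hg_mean s hs ((ball_subset_ball (by linarith)).trans hxs))
      hx_half hφx hφκ hgφ
    have h_sub := radialBarrier_sub_le (t := t) hα_pos (by linarith : ‖x‖ ≤ 1)
      (mem_ball_zero_iff.1 hy).le
    rw [dist_comm y]
    linarith [mul_le_mul_of_nonneg_left h_sub hΛ.le]
  · have hcφ : c * φ x ≤ φ x / 16 := by nlinarith
    have hφL := h.le_mul_norm (by linarith : ‖x‖ < 1)
    have hx_sq : (1 / 2) ^ 2 ≤ ‖x‖ ^ 2 := by gcongr
    have hε_lt : ε < 1 / 16 := lt_of_mul_lt_mul_left (by nlinarith) hL.le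
    have h_strict : ∀ᶠ r in 𝓝[>] 0,
        -Λ * radialBarrier α t x < ⨍ y in ball x r, -Λ * radialBarrier α t y := by
      filter_upwards [eventually_setAverage_radialBarrier_lt hα_pos ht (ht'.trans_le hx_half)
        (by nlinarith)] with r hr
      rw [setAverage_const_mul]
      exact mul_lt_mul_of_neg_left hr (neg_neg_of_pos hΛ)
    exact fun h_max ↦ h.not_isLocalMax_sub hL (continuous_radialBarrier.const_mul _) h_strict hg
      hg_mean hε (by linarith) (by linarith)
      (h_max.isLocalMax (closedBall_mem_nhds_of_mem (mem_ball_zero_iff.2 hx)))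

/-- At a maximum `x`, linearizing `√g` turns it into a multiple of `g`, to which the mean value
inequality applies. -/
theorem not_isMaxOn_sub_sqrt [Nontrivial E] (h : IsStateFunction φ Ω L κ) (hL : 0 < L) (hκ : 0 < κ)
    (hc : 0 < c) (hc' : 16 * c ≤ 1) (hcL : 16 * c * L ≤ κ)
    (hΛ : 0 < Λ) (hΛc : 4 * Λ < c ^ Module.finrank ℝ E * κ)
    (hα : 2 * Module.finrank ℝ E < α) (ht : 0 ≤ t) (ht' : t < 1 / 2) (hμκ : 4 * μ ≤ κ)
    (hμ : μ ≤ Λ * ((Real.exp (-(α * (1 / 2) ^ 2)) - Real.exp (-(α * (3 / 4) ^ 2))) / (2 * α)))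
    (hg : Continuous g) (hg_pos : ∀ y ∈ ball (0 : E) 1, 0 < g y)
    (hg_mean : ∀ y s, 0 < s → ball y (s + ε) ⊆ Ω → ⨍ z in ball y s, g z ≤ g y)
    (hg_large : ∀ y, ‖y‖ ≤ 3 / 4 → μ ≤ φ y → L ^ 2 ≤ g y)
    (hε : 0 < ε) (hx : ‖x‖ ≤ 3 / 4) (hεφ : L * ε ≤ c * φ x)
    (h_lt : √(g x) + Λ * radialBarrier α t x < φ x) :
    ¬ IsMaxOn (fun y ↦ φ y + -Λ * radialBarrier α t y - √(g y)) (closedBall 0 (3 / 4)) x :=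
    fun h_max ↦ by
  have hα_pos : 0 < α := lt_of_le_of_lt (by positivity) hα
  have h_barrier : 0 ≤ Λ * radialBarrier α t x :=
    mul_nonneg hΛ.le (radialBarrier_nonneg hα_pos.le)
  have h_sqrt : 0 ≤ √(g x) := Real.sqrt_nonneg _
  have hφL : φ x ≤ L * (3 / 4) := (h.le_mul_norm (by linarith)).trans (by gcongr)
  have hφμ : φ x < μ := not_le.1 fun hμφ ↦ by
    linarith [Real.le_sqrt_of_sq_le (hg_large x hx hμφ)]
  have hx_lt : ‖x‖ < 3 / 4 := not_le.1 fun hx_ge ↦ by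
    have h_ge := radialBarrier_ge hα_pos ht ht'.le (by norm_num) hx_ge
    linarith [mul_le_mul_of_nonneg_left h_ge hΛ.le]
  have hgx : 0 < g x := hg_pos x (mem_ball_zero_iff.2 (by linarith))
  have h_slope : 0 ≤ (2 * √(g x))⁻¹ := by positivity
  refine h.not_isMaxOn_sub_radialBarrier hL hκ hc hc' hcL hΛ hΛc hα ht ht' (by fun_prop)
    (fun y hy ↦ mul_nonneg h_slope (hg_pos y hy).le) (fun s hs hxs ↦ ?_) hε hx_lt hεφ
    (by linarith) (by linarith) ?_ (isMaxOn_sub_sqrt_linearization (fun y hy ↦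
      (hg_pos y (closedBall_subset_ball (by norm_num) hy)).le) hgx h_max)
  · rw [setAverage_const_mul]
    exact mul_le_mul_of_nonneg_left (hg_mean x s hs hxs) h_slope
  · rw [inv_two_mul_sqrt_mul_self hgx]
    linarith

theorem sq_le_four_mul_of_setAverage_le [Nontrivial E] (h : IsStateFunction φ Ω L κ) (hL : 0 < L)
    (hκ : 0 < κ) (hc : 0 < c) (hc' : 16 * c ≤ 1) (hcL : 16 * c * L ≤ κ)
    (hΛ : 0 < Λ) (hΛc : 4 * Λ < c ^ Module.finrank ℝ E * κ)
    (hα : 2 * Module.finrank ℝ E < α) (hμκ : 4 * μ ≤ κ)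
    (hμ : μ ≤ Λ * ((Real.exp (-(α * (1 / 2) ^ 2)) - Real.exp (-(α * (3 / 4) ^ 2))) / (2 * α)))
    (hg : Continuous g) (hg_pos : ∀ y ∈ ball (0 : E) 1, 0 < g y)
    (hg_mean : ∀ y s, 0 < s → ball y (s + ε) ⊆ Ω → ⨍ z in ball y s, g z ≤ g y)
    (hg_large : ∀ y, ‖y‖ ≤ 3 / 4 → μ ≤ φ y → L ^ 2 ≤ g y)
    (hε : 0 < ε) (hx : ‖x‖ < 1 / 2) (hεφ : 2 * L * ε ≤ c * φ x) : φ x ^ 2 ≤ 4 * g x := by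
  by_contra! h_lt
  have hα_nonneg : 0 ≤ α := le_trans (by positivity) hα.le
  have hφx : 0 < φ x := pos_of_mul_pos_right (lt_of_lt_of_le (by positivity) hεφ) hc.le
  have h_sqrt_lt : √(g x) < φ x / 2 := (Real.sqrt_lt' (by positivity)).2 (by linarith)
  obtain ⟨x₁, hx₁, h_max⟩ := (isCompact_closedBall (0 : E) (3 / 4)).exists_isMaxOn
    (f := fun y ↦ φ y + -Λ * radialBarrier α ‖x‖ y - √(g y))
    ⟨0, mem_closedBall_self (by norm_num)⟩
    ((h.continuous.add (continuous_radialBarrier.const_mul _)).sub hg.sqrt).continuousOn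
  have h_le := isMaxOn_iff.1 h_max x (mem_closedBall_zero_iff.2 (by linarith))
  rw [radialBarrier_eq_zero hα_nonneg le_rfl, mul_zero, add_zero] at h_le
  have h_barrier : 0 ≤ Λ * radialBarrier α ‖x‖ x₁ :=
    mul_nonneg hΛ.le (radialBarrier_nonneg hα_nonneg)
  have hφx₁ : φ x / 2 ≤ φ x₁ := by linarith [Real.sqrt_nonneg (g x₁)]
  exact h.not_isMaxOn_sub_sqrt hL hκ hc hc' hcL hΛ hΛc hα (norm_nonneg x) hx hμκ hμ hg hg_pos
    hg_mean hg_large hε (mem_closedBall_zero_iff.1 hx₁) (by nlinarith) (by linarith) h_max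

theorem exists_forall_sq_le_four_mul [Nontrivial E] (hL : 0 < L) (hκ : 0 < κ) :
    ∃ c > 0, c ≤ 1 / 16 ∧ ∃ μ > 0, ∀ (Ω : Set E) (φ : E → ℝ), IsStateFunction φ Ω L κ →
      ∀ (ε : ℝ) (g : E → ℝ), 0 < ε → Continuous g → (∀ y ∈ ball (0 : E) 1, 0 < g y) →
      (∀ y s, 0 < s → ball y (s + ε) ⊆ Ω → ⨍ z in ball y s, g z ≤ g y) →
      (∀ y, ‖y‖ ≤ 3 / 4 → μ ≤ φ y → L ^ 2 ≤ g y) →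
      ∀ x, ‖x‖ < 1 / 2 → 2 * L * ε ≤ c * φ x → φ x ^ 2 ≤ 4 * g x := by
  have h_dim : 0 < (Module.finrank ℝ E : ℝ) := by exact_mod_cast Module.finrank_pos
  obtain ⟨c, hc, hc', hcL⟩ : ∃ c > 0, c ≤ 1 / 16 ∧ c * (16 * L) ≤ κ :=
    ⟨min (1 / 16) (κ / (16 * L)), by positivity, min_le_left _ _,
      (le_div_iff₀ (by positivity)).1 (min_le_right _ _)⟩
  set α := 4 * (Module.finrank ℝ E : ℝ)
  set Λ := c ^ Module.finrank ℝ E * κ / 8 with hΛ_def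
  set b := (Real.exp (-(α * (1 / 2) ^ 2)) - Real.exp (-(α * (3 / 4) ^ 2))) / (2 * α)
  have hα : 0 < α := by positivity
  have hΛ : 0 < Λ := by positivity
  have hb : 0 < b := div_pos (sub_pos.2 (Real.exp_lt_exp.2 (by linarith))) (by positivity)
  obtain ⟨μ, hμ, hμκ, hμb⟩ : ∃ μ > 0, μ ≤ κ / 4 ∧ μ ≤ Λ * b :=
    ⟨min (κ / 4) (Λ * b), by positivity, min_le_left _ _, min_le_right _ _⟩
  refine ⟨c, hc, hc', μ, hμ, ?_⟩
  intro Ω φ h ε g hε hg hg_pos hg_mean hg_large x hx hεφ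
  exact h.sq_le_four_mul_of_setAverage_le hL hκ hc (by linarith) (by linarith) hΛ (by linarith)
    (by linarith) (by linarith) hμb hg hg_pos hg_mean hg_large hε hx hεφ

end IsStateFunction

end Comparison

section BoundaryEstimate

variable {E : Type*} [NormedAddCommGroup E] [InnerProductSpace ℝ E] [FiniteDimensional ℝ E]
  [MeasurableSpace E] [BorelSpace E] {φ w : E → ℝ} {Ω : Set E} {L κ μ R σ : ℝ} {x : E}

theorem IsStateFunction.superlevel_subset_innerParallelSet (h : IsStateFunction φ Ω L κ)
    (hL : 0 < L) (hμ : 0 < μ) :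
    {y | μ < φ y} ∩ ball 0 (7 / 8) ⊆ innerParallelSet Ω (min (μ / L) (1 / 16)) := fun y hy ↦ by
  refine h.ball_subset hL (by positivity) ?_ ?_
  · linarith [mem_ball_zero_iff.1 hy.2, min_le_right (μ / L) (1 / 16)]
  · rw [← le_div_iff₀' hL]
    exact (min_le_left _ _).trans (div_le_div_of_nonneg_right hy.1.le hL.le)

theorem IsStateFunction.exists_superharmonic [Nontrivial E] (h : IsStateFunction φ Ω L κ)
    (hL : 0 < L) (hw : IsPositiveHarmonicOn w Ω)
    (hw_le : ∀ y ∈ ball (0 : E) 1, μ / 2 < φ y → w y ≤ 1)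
    (hR : 0 < R) (hR' : 16 * R ≤ 1) (hRμ : 4 * L * R ≤ μ) (hσ : 0 < σ) (hσR : σ ≤ R)
    (hx : ‖x‖ < 1 / 2) (hσφ : 3 * L * σ ≤ φ x) :
    ∃ g : E → ℝ, Continuous g ∧ (∀ y ∈ ball (0 : E) 1, 0 < g y) ∧
      (∀ y s, 0 < s → ball y (s + 2 * σ) ⊆ Ω → ⨍ z in ball y s, g z ≤ g y) ∧
      (∀ y, ‖y‖ ≤ 3 / 4 → μ ≤ φ y → L ^ 2 ≤ g y) ∧
      g x ≤ (L / R) ^ 2 * (2 * ((4 / σ) ^ Module.finrank ℝ E / w x)) := by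
  have hμ : 0 < μ := lt_of_lt_of_le (by positivity) hRμ
  have hD : MeasurableSet ({y | μ / 2 < φ y} ∩ ball 0 (7 / 8)) :=
    ((isOpen_lt continuous_const h.continuous).inter isOpen_ball).measurableSet
  obtain ⟨q, hq, hq_pos, hq_mean, hq_large, hqx⟩ := hw.exists_green h.subset_ball hD
    (by positivity) (h.superlevel_subset_innerParallelSet hL (half_pos hμ))
    (fun y hy ↦ hw_le y (ball_subset_ball (by norm_num) hy.2) hy.1) hσ
    (h.ball_subset hL (by positivity) (by linarith) (by linarith) : ball x (3 * σ) ⊆ Ω)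
  refine ⟨fun y ↦ (L / R) ^ 2 * q y, by fun_prop, fun y hy ↦ ?_, fun y s hs hys ↦ ?_,
    fun y hy hyφ ↦ ?_, mul_le_mul_of_nonneg_left hqx (by positivity)⟩
  · exact mul_pos (by positivity) (hq_pos y hy)
  · rw [setAverage_const_mul]
    exact mul_le_mul_of_nonneg_left (hq_mean y s hs hys) (by positivity)
  · have h_ball : ball y (R + σ) ⊆ {z | μ / 2 < φ z} ∩ ball 0 (7 / 8) := fun z hz ↦ by
      have h_norm := norm_le_norm_add_norm_sub' z y
      rw [← dist_eq_norm] at h_norm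
      have hz_norm : ‖z‖ < 7 / 8 := by linarith [mem_ball.1 hz]
      have h_lip := h.sub_le (by linarith : ‖y‖ < 1) (by linarith : ‖z‖ < 1)
      have h_dist : L * dist y z < L * (R + R) :=
        mul_lt_mul_of_pos_left (by linarith [mem_ball'.1 hz]) hL
      exact ⟨by rw [Set.mem_ofPred_eq]; linarith, mem_ball_zero_iff.2 hz_norm⟩
    calc L ^ 2 = (L / R) ^ 2 * R ^ 2 := by field_simp
      _ ≤ (L / R) ^ 2 * q y := by gcongr; exact hq_large y R hR.le h_ball

theorem le_mul_rpow_neg_of_sq_le {a b A B : ℝ} {n : ℕ} (ha : 0 < a) (hb : 0 < b)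
    (h : a ^ 2 ≤ A * ((B / a) ^ n / b)) : b ≤ A * B ^ n * a ^ (-((n + 2 : ℕ) : ℝ)) := by
  rw [Real.rpow_neg ha.le, Real.rpow_natCast, ← div_eq_mul_inv, le_div_iff₀ (by positivity)]
  calc b * a ^ (n + 2) = b * a ^ n * a ^ 2 := by ring
    _ ≤ b * a ^ n * (A * ((B / a) ^ n / b)) := by gcongr
    _ = A * B ^ n := by
      rw [div_pow]
      field_simp

variable (E) in
theorem stmt_10_general [Nontrivial E] (L κ : ℝ) (hL : 0 < L) (hκ : 0 < κ) :
    ∃ δ₂ > (0 : ℝ), ∃ C > (0 : ℝ), ∃ p > (0 : ℝ),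
      ∀ (Ω : Set E) (φ : E → ℝ), IsStateFunction φ Ω L κ → ∀ δ ≤ δ₂, ∀ w : E → ℝ,
      IsPositiveHarmonicOn w Ω → (∀ x ∈ ball 0 1, δ < φ x → w x ≤ 1) →
      ∀ x ∈ ball 0 (1 / 2) ∩ Ω, w x ≤ C * φ x ^ (-p) := by
  obtain ⟨c, hc, hc', μ, hμ, h_comparison⟩ :=
    IsStateFunction.exists_forall_sq_le_four_mul (E := E) hL hκ
  obtain ⟨R, hR, hR', hRμ⟩ : ∃ R > 0, R ≤ 1 / 16 ∧ R ≤ μ / (4 * L) :=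
    ⟨min (1 / 16) (μ / (4 * L)), by positivity, min_le_left _ _, min_le_right _ _⟩
  obtain ⟨k, hk, hkc, hkR⟩ : ∃ k > 0, k ≤ c / (4 * L) ∧ k ≤ R / L :=
    ⟨min (c / (4 * L)) (R / L), by positivity, min_le_left _ _, min_le_right _ _⟩
  rw [le_div_iff₀ (by positivity)] at hRμ hkc hkR
  refine ⟨μ / 2, by positivity, 8 * (L / R) ^ 2 * (4 / k) ^ Module.finrank ℝ E, by positivity,
    (Module.finrank ℝ E + 2 : ℕ), by positivity, ?_⟩
  rintro Ω φ h δ hδ w hw hw_le x ⟨hx, hxΩ⟩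
  rw [mem_ball_zero_iff] at hx
  have hφx : 0 < φ x := h.pos x hxΩ
  have hwx : 0 < w x := hw.pos x hxΩ
  have hφL : φ x ≤ L * 1 := (h.le_mul_norm (by linarith)).trans (by gcongr; linarith)
  obtain ⟨g, hg, hg_pos, hg_mean, hg_large, hgx⟩ := h.exists_superharmonic hL hw
    (fun y hy hyφ ↦ hw_le y hy (hδ.trans_lt hyφ)) hR (by linarith) (by linarith)
    (σ := k * φ x) (by positivity) (by nlinarith) hx (by nlinarith)
  refine le_mul_rpow_neg_of_sq_le hφx hwx ?_
  calc φ x ^ 2 ≤ 4 * g x :=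
        h_comparison Ω φ h _ g (by positivity) hg hg_pos hg_mean hg_large x hx (by nlinarith)
    _ ≤ 4 * ((L / R) ^ 2 * (2 * ((4 / (k * φ x)) ^ Module.finrank ℝ E / w x))) := by gcongr
    _ = 8 * (L / R) ^ 2 * ((4 / k / φ x) ^ Module.finrank ℝ E / w x) := by
      rw [div_div 4]
      ring

end BoundaryEstimate

/-- Pointwise estimate up to the boundary: there are `δ₂, C, p > 0` depending only on
`d`, `L`, `κ` such that every positive harmonic `w` on `Ω` with `w ≤ 1` on
`B₁ ∩ {φ > δ}` (for `δ ∈ (0, δ₂]`) satisfies `w ≤ C φ^{-p}` on `B_{1/2} ∩ Ω`. -/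
theorem stmt_10 (d : ℕ) (hd : 0 < d) (L κ : ℝ) (hL : 0 < L) (hκ : 0 < κ) :
    ∃ δ₂ > (0:ℝ), ∃ C > (0:ℝ), ∃ p > (0:ℝ),
      ∀ (Ω : Set (EuclideanSpace ℝ (Fin d))) (φ : EuclideanSpace ℝ (Fin d) → ℝ),
      IsOpen Ω → Ω ⊆ ball 0 1 → (0 : EuclideanSpace ℝ (Fin d)) ∈ frontier Ω →
      Continuous φ →
      (∀ x ∈ Ω, 0 < φ x) →
      (∀ x ∈ ball (0 : EuclideanSpace ℝ (Fin d)) 1 \ Ω, φ x = 0) →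
      (∀ x ∈ ball (0 : EuclideanSpace ℝ (Fin d)) 1,
        ∀ y ∈ ball (0 : EuclideanSpace ℝ (Fin d)) 1, |φ x - φ y| ≤ L * dist x y) →
      (∀ x ∈ ball (0 : EuclideanSpace ℝ (Fin d)) (1/2),
        κ * infDist x (ball (0 : EuclideanSpace ℝ (Fin d)) 1 \ Ω) ≤ φ x) →
      (∀ ψ : EuclideanSpace ℝ (Fin d) → ℝ, ContDiff ℝ (⊤ : ℕ∞) ψ → HasCompactSupport ψ →
        tsupport ψ ⊆ ball (0 : EuclideanSpace ℝ (Fin d)) 1 → (∀ x, 0 ≤ ψ x) →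
        0 ≤ ∫ x in ball (0 : EuclideanSpace ℝ (Fin d)) 1, φ x *
          (∑ i : Fin d, fderiv ℝ (fun y => fderiv ℝ ψ y (EuclideanSpace.single i 1)) x
            (EuclideanSpace.single i 1))) →
      ∀ δ, 0 < δ → δ ≤ δ₂ →
      ∀ w : EuclideanSpace ℝ (Fin d) → ℝ, (∀ x ∈ Ω, 0 < w x) →
        (∀ x r, 0 < r → ball x r ⊆ Ω → w x = ⨍ y in ball x r, w y) →
        (∀ x ∈ ball (0 : EuclideanSpace ℝ (Fin d)) 1, δ < φ x → w x ≤ 1) →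
      ∀ x ∈ ball (0 : EuclideanSpace ℝ (Fin d)) (1/2) ∩ Ω,
        w x ≤ C * φ x ^ (-p) := by
  have : NeZero d := ⟨hd.ne'⟩
  obtain ⟨δ₂, hδ₂, C, hC, p, hp, h⟩ := stmt_10_general (EuclideanSpace ℝ (Fin d)) L κ hL hκ
  refine ⟨δ₂, hδ₂, C, hC, p, hp, fun Ω φ hΩ hΩ_sub h_zero hφ hφ_pos hφ_zero hφ_lip hφ_dist hφ_sub
    δ _ hδ w hw_pos hw_mean hw_le ↦ h Ω φ ⟨hΩ_sub, ?_, hφ, hφ_pos, hφ_zero, hφ_lip, hφ_dist,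
      fun ψ hψ hψ_cpt hψ_supp hψ_nonneg ↦ ?_⟩ δ hδ w ⟨hw_pos, hw_mean⟩ hw_le⟩
  · exact (hΩ.frontier_eq ▸ h_zero).2
  · simpa [laplacian_eq_sum_fderiv_fderiv (EuclideanSpace.basisFun (Fin d) ℝ)
      (hψ.of_le (WithTop.coe_le_coe.2 le_top) : ContDiff ℝ 2 ψ)] using
      hφ_sub ψ hψ hψ_cpt hψ_supp hψ_nonneg
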